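/- arXiv:2304.14527 — 9 statements merged into one kernel-verified Lean document; each statement's English description precedes it below -/
import Mathlib

section
/- Let K ≥ 2 be an even integer, let G be a finite simple bipartite graph in which every vertex has degree exactly 2, and let M be a matching in G having no augmenting paths of length ≤ 2K+1. Define Y_0 to be the set of vertices of G not covered by M, and recursively Y_{2k+1} = N_G(Y_{2k}) and Y_{2k+2} = N_M(Y_{2k+1}) for k = 0, 1, …, (K−2)/2. Then |Y_K| = K · |Y_0|. -/
/-- A vertex `v` is covered by a set `M` of edges if it lies on some edge of `M`. -/
def coveredBy {V : Type*} (M : Set (Sym2 V)) (v : V) : Prop := ∃ e ∈ M, v ∈ e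

/-- `M` is a matching in `G`: a set of edges of `G`, no two of which share a vertex. -/
def isMatching {V : Type*} (G : SimpleGraph V) (M : Set (Sym2 V)) : Prop :=
  M ⊆ G.edgeSet ∧ ∀ e ∈ M, ∀ f ∈ M, e ≠ f → ∀ v : V, ¬(v ∈ e ∧ v ∈ f)

/-- `p 0, p 1, …, p l` is an `M`-augmenting path of length `l` in `G`:
a path whose endpoints are not covered by `M`, whose edges alternate outside/inside `M`,
beginning and ending with edges outside `M` (so `l` is odd). -/
def isAugPath {V : Type*} (G : SimpleGraph V) (M : Set (Sym2 V)) (p : ℕ → V) (l : ℕ) : Prop :=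
  Odd l ∧ (∀ i < l, G.Adj (p i) (p (i+1))) ∧
  (∀ i ≤ l, ∀ j ≤ l, p i = p j → i = j) ∧
  ¬ coveredBy M (p 0) ∧ ¬ coveredBy M (p l) ∧
  ∀ i < l, (s(p i, p (i+1)) ∈ M ↔ Odd i)

/-- `G` is bipartite: the vertices can be split into a set `A` and its complement so that
every edge has one endpoint in `A` and the other outside `A`. -/
def isBipartite {V : Type*} (G : SimpleGraph V) : Prop :=
  ∃ A : Set V, ∀ v w : V, G.Adj v w → (v ∈ A ↔ w ∉ A)

/-- `N_G(S)`: vertices adjacent in `G` to some vertex of `S`. -/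
def NG {V : Type*} (G : SimpleGraph V) (S : Set V) : Set V := {w | ∃ v ∈ S, G.Adj v w}

/-- `N_M(S)`: vertices joined by an edge of `M` to some vertex of `S`. -/
def NM {V : Type*} (M : Set (Sym2 V)) (S : Set V) : Set V := {w | ∃ v ∈ S, s(v, w) ∈ M}

/-- `Yseq G M S` : `Y_0 = S`, `Y_{2k+1} = N_G(Y_{2k})`, `Y_{2k+2} = N_M(Y_{2k+1})`. -/
def Yseq {V : Type*} (G : SimpleGraph V) (M : Set (Sym2 V)) (S : Set V) : ℕ → Set V
  | 0 => S
  | (l+1) => if Even l then NG G (Yseq G M S l) else NM M (Yseq G M S l)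

/-- `Wseq G M x` : `W_0 = {x}`, `W_{2k+1} = N_M(W_{2k})`, `W_{2k+2} = N_G(W_{2k+1})`. -/
def Wseq {V : Type*} (G : SimpleGraph V) (M : Set (Sym2 V)) (x : V) : ℕ → Set V
  | 0 => {x}
  | (l+1) => if Even l then NM M (Wseq G M x l) else NG G (Wseq G M x l)

/-- The set of edges of the path `p 0, …, p l`. -/
def pathEdges {V : Type*} (p : ℕ → V) (l : ℕ) : Set (Sym2 V) :=
  {e | ∃ i < l, e = s(p i, p (i+1))}

def TrailG {V : Type*} (G : SimpleGraph V) (p : ℕ → V) : Prop :=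
  (∀ i, G.Adj (p i) (p (i+1))) ∧ (∀ i x, G.Adj (p (i+1)) x → x = p i ∨ x = p (i+2)) ∧
  ∀ i, p (i+2) ≠ p i

lemma trail_back {V : Type*} {G : SimpleGraph V} {p q : ℕ → V} (hp : TrailG G p)
    (hq : TrailG G q) (n : ℕ) : ∀ i j, p (i+n) = q (j+n) → p (i+n+1) = q (j+n+1) →
    p i = q j ∧ p (i+1) = q (j+1) := by
  induction n with
  | zero => intro i j h1 h2; exact ⟨h1, h2⟩
  | succ n ih =>
    intro i j h1 h2
    apply ih i j _ h1
    have a1 := (hp.1 (i+n)).symm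
    have a2 := hp.2.2 (i+n)
    have e1 : p (i+n+1) = q (j+n+1) := h1
    have e2 : p (i+n+2) = q (j+n+2) := h2
    rw [e1] at a1
    rcases hq.2.1 _ _ a1 with h | h
    · exact h
    · exact absurd (e2.trans h.symm) a2

lemma matching_unique {V : Type*} {G : SimpleGraph V} {M : Set (Sym2 V)} (hM : isMatching G M)
    {v x y : V} (hx : s(v, x) ∈ M) (hy : s(v, y) ∈ M) : x = y := by
  by_contra hne
  refine hM.2 _ hx _ hy ?_ v ⟨by simp, by simp⟩
  intro h
  exact hne (Sym2.congr_right.1 h)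

lemma trail_parity {V : Type*} {G : SimpleGraph V} {p : ℕ → V} (hp : TrailG G p) {A : Set V}
    (hA : ∀ v w : V, G.Adj v w → (v ∈ A ↔ w ∉ A)) (i n : ℕ) :
    (p i ∈ A ↔ p (i+n) ∈ A) ↔ Even n := by
  induction n with
  | zero => simp
  | succ n ih =>
    have := hA _ _ (hp.1 (i+n))
    rw [Nat.even_add_one, ← ih, ← add_assoc]
    tauto

lemma trail_alt {V : Type*} (G : SimpleGraph V) (M : Set (Sym2 V))
    (K : ℕ) (hbip : isBipartite G) (hM : isMatching G M)
    (hnoaug : ∀ (p : ℕ → V) (l : ℕ), l ≤ 2 * K + 1 → ¬ isAugPath G M p l)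
    (p : ℕ → V) (hp : TrailG G p) (h0 : ¬ coveredBy M (p 0)) (n : ℕ) (hn : n ≤ 2 * K + 1) :
    (∀ i, 1 ≤ i → i ≤ n → coveredBy M (p i)) ∧ ∀ i ≤ n, (s(p i, p (i+1)) ∈ M ↔ Odd i) := by
  obtain ⟨A, hA⟩ := hbip
  induction n with
  | zero =>
    refine ⟨fun i h1 h2 => by omega, fun i hi => ?_⟩
    obtain rfl : i = 0 := by omega
    simp only [Nat.not_odd_zero, iff_false]
    exact fun h => h0 ⟨_, h, by simp⟩
  | succ n ih =>
    obtain ⟨hc, he⟩ := ih (by omega)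
    have hcov : coveredBy M (p (n+1)) := by
      by_cases ho : Odd n
      · exact ⟨_, (he n le_rfl).2 ho, by simp⟩
      by_contra hu
      have hev : Even n := Nat.not_odd_iff_even.1 ho
      apply hnoaug p (n+1) hn
      refine ⟨hev.add_one, fun i _ => hp.1 i, ?_, h0, hu, fun i hi => he i (by omega)⟩
      have key : ∀ a b, a < b → b ≤ n + 1 → p a ≠ p b := by
        intro a b hab hb heq
        obtain ⟨c, rfl⟩ : ∃ c, b = a + c := ⟨b - a, by omega⟩
        have hcev : Even c := by
          rw [← trail_parity hp hA a c, heq]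
        rcases Nat.eq_zero_or_pos a with rfl | ha
        · rw [zero_add] at *
          rcases Nat.lt_or_ge n c with h | h
          · obtain rfl : c = n + 1 := by omega
            exact (Nat.not_even_iff_odd.2 hev.add_one) hcev
          · exact h0 (heq ▸ hc c hab h)
        · have hb' : a + c ≤ n := by
            by_contra hcon
            have : a + c = n + 1 := by omega
            rw [this] at heq
            exact hu (heq ▸ hc a ha (by omega))
          obtain ⟨a, rfl⟩ : ∃ a', a = a' + 1 := ⟨a - 1, by omega⟩
          obtain ⟨c, rfl⟩ : ∃ c', c = c' + 1 := ⟨c - 1, by omega⟩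
          have e1 : p (a+1) = p (a + (c+1) + 1) := by rw [heq]; congr 1; omega
          have a1 := hp.1 (a + (c+1) + 1)
          rw [← e1] at a1
          rcases hp.2.1 a _ a1 with h | h
          · have h1 := he a (by omega)
            have h2 := he (a + (c+1) + 1) (by omega)
            rw [← e1, h, Sym2.eq_swap] at h2
            have := h1.symm.trans h2
            grind
          · have := (trail_back hp hp (a+1) 0 (c+1) (by rw [zero_add, heq]; congr 1; omega)
              (by rw [zero_add]; rw [← h]; congr 1; omega)).1
            exact h0 (this ▸ hc (c+1) (by omega) (by omega))
      intro i hi j hj hij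
      rcases lt_trichotomy i j with h | h | h
      · exact absurd hij (key i j h hj)
      · exact h
      · exact absurd hij.symm (key j i h hi)
    refine ⟨fun i h1 h2 => ?_, fun i hi => ?_⟩
    · rcases Nat.lt_or_ge n i with h | h
      · obtain rfl : i = n + 1 := by omega
        exact hcov
      · exact hc i h1 h
    · rcases Nat.lt_or_ge n i with h | h
      · obtain rfl : i = n + 1 := by omega
        have hen := he n le_rfl
        constructor
        · intro hm
          by_contra ho
          have : Odd n := by grind
          have hmn := hen.2 this
          rw [Sym2.eq_swap] at hmn
          exact hp.2.2 n (matching_unique hM hm hmn)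
        · intro ho
          have hnm : s(p n, p (n+1)) ∉ M := by
            rw [hen]; grind
          obtain ⟨e, heM, hpe⟩ := hcov
          obtain ⟨x, rfl⟩ := hpe
          have hadj : G.Adj (p (n+1)) x := hM.1 heM
          rcases hp.2.1 n x hadj with h | h
          · rw [h, Sym2.eq_swap] at heM
            exact absurd heM hnm
          · rw [h] at heM
            exact heM
      · exact he i h

/-- The non-backtracking walk started at `u, a`. -/
def trW {V : Type*} (o : V → V → V) (u a : V) : ℕ → V
  | 0 => u
  | 1 => a
  | (n+2) => o (trW o u a n) (trW o u a (n+1))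

lemma exists_other {V : Type*} [Fintype V] (G : SimpleGraph V)
    (hdeg : ∀ v : V, (G.neighborSet v).ncard = 2) (u v : V) :
    ∃ w, G.Adj u v → (G.Adj v w ∧ w ≠ u ∧ ∀ x, G.Adj v x → x = u ∨ x = w) := by
  obtain ⟨x, y, hxy, h⟩ := Set.ncard_eq_two.1 (hdeg v)
  have hm : ∀ z, G.Adj v z ↔ z = x ∨ z = y := by
    intro z
    have : z ∈ G.neighborSet v ↔ z ∈ ({x, y} : Set V) := by rw [h]
    simpa using this
  by_cases hu : u = x
  · exact ⟨y, fun _ => ⟨(hm y).2 (Or.inr rfl), by rw [hu]; exact hxy.symm,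
      fun z hz => by rw [hu]; exact (hm z).1 hz⟩⟩
  · refine ⟨x, fun ha => ⟨(hm x).2 (Or.inl rfl), fun h => hu h.symm, fun z hz => ?_⟩⟩
    have := (hm u).1 ha.symm
    have := (hm z).1 hz
    grind

lemma trW_trail {V : Type*} (G : SimpleGraph V) (o : V → V → V)
    (ho : ∀ u v, G.Adj u v → (G.Adj v (o u v) ∧ o u v ≠ u ∧ ∀ x, G.Adj v x → x = u ∨ x = o u v))
    (u a : V) (h : G.Adj u a) : TrailG G (trW o u a) := by
  have h1 : ∀ i, G.Adj (trW o u a i) (trW o u a (i+1)) := by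
    intro i
    induction i with
    | zero => exact h
    | succ n ih => exact (ho _ _ ih).1
  exact ⟨h1, fun i x hx => (ho _ _ (h1 i)).2.2 x hx, fun i => (ho _ _ (h1 i)).2.1⟩

lemma ncard_darts {V : Type*} [Fintype V] (G : SimpleGraph V)
    (hdeg : ∀ v : V, (G.neighborSet v).ncard = 2) (S : Set V) :
    {d : V × V | d.1 ∈ S ∧ G.Adj d.1 d.2}.ncard = 2 * S.ncard := by
  classical
  rw [Set.ncard_eq_toFinset_card', Set.ncard_eq_toFinset_card' S, mul_comm]
  rw [Finset.card_eq_sum_card_fiberwise (f := Prod.fst) (t := S.toFinset)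
    (fun d hd => by simp at hd ⊢; exact hd.1), Finset.sum_const_nat]
  intro v hv
  rw [← hdeg v, Set.ncard_eq_toFinset_card']
  have hv' : v ∈ S := by simpa using hv
  refine Finset.card_bij (fun d _ => d.2) ?_ ?_ ?_
  · intro d hd
    simp at hd ⊢
    obtain ⟨⟨_, h⟩, rfl⟩ := hd
    exact h
  · intro d hd e he h
    simp at hd he
    exact Prod.ext (hd.2.trans he.2.symm) h
  · intro b hb
    refine ⟨(v, b), ?_, rfl⟩
    simp at hb ⊢
    exact ⟨hv', hb⟩

/-- For a finite 2-regular bipartite graph and a matching `M` with no augmenting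
paths of length ≤ 2K+1 (K ≥ 2 even), `|Y_K| = K·|Y_0|` where `Y_0` is the set of uncovered
vertices and `Y_{2k+1} = N_G(Y_{2k})`, `Y_{2k+2} = N_M(Y_{2k+1})`. -/
theorem stmt0 {V : Type*} [Fintype V] (G : SimpleGraph V) (M : Set (Sym2 V))
    (K : ℕ) (hK2 : 2 ≤ K) (hKeven : Even K)
    (hbip : isBipartite G)
    (hdeg : ∀ v : V, (G.neighborSet v).ncard = 2)
    (hM : isMatching G M)
    (hnoaug : ∀ (p : ℕ → V) (l : ℕ), l ≤ 2 * K + 1 → ¬ isAugPath G M p l) :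
    (Yseq G M {v : V | ¬ coveredBy M v} K).ncard
      = K * ({v : V | ¬ coveredBy M v}).ncard := by
  classical
  have hex := exists_other G hdeg
  choose o ho using hex
  set S : Set V := {v : V | ¬ coveredBy M v} with hS
  set D : Set (V × V) := {d : V × V | d.1 ∈ S ∧ G.Adj d.1 d.2} with hD
  have hT : ∀ d ∈ D, TrailG G (trW o d.1 d.2) := fun d hd => trW_trail G o ho _ _ hd.2
  have hE : ∀ d ∈ D, (∀ i, 1 ≤ i → i ≤ 2*K+1 → coveredBy M (trW o d.1 d.2 i)) ∧
      ∀ i ≤ 2*K+1, (s(trW o d.1 d.2 i, trW o d.1 d.2 (i+1)) ∈ M ↔ Odd i) := fun d hd =>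
    trail_alt G M K hbip hM hnoaug _ (hT d hd) hd.1 _ le_rfl
  have hNM : ∀ k, k < K → NM M {w | ∃ d ∈ D, ∃ j ≤ k, w = trW o d.1 d.2 (2*j+1)} =
      {w | ∃ d ∈ D, ∃ j ≤ k, w = trW o d.1 d.2 (2*j+2)} := by
    intro k hk
    ext w
    constructor
    · rintro ⟨v, ⟨d, hd, j, hj, rfl⟩, hw⟩
      exact ⟨d, hd, j, hj, matching_unique hM hw
        (((hE d hd).2 (2*j+1) (by omega)).2 ⟨j, rfl⟩)⟩
    · rintro ⟨d, hd, j, hj, rfl⟩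
      exact ⟨_, ⟨d, hd, j, hj, rfl⟩, ((hE d hd).2 (2*j+1) (by omega)).2 ⟨j, rfl⟩⟩
  have hY : ∀ k, k < K → Yseq G M S (2*k+1) =
      {w | ∃ d ∈ D, ∃ j ≤ k, w = trW o d.1 d.2 (2*j+1)} := by
    intro k
    induction k with
    | zero =>
      intro _
      ext w
      simp only [Yseq, mul_zero, Even.zero, if_true]
      constructor
      · rintro ⟨v, hv, hvw⟩
        exact ⟨(v, w), ⟨hv, hvw⟩, 0, le_rfl, rfl⟩
      · rintro ⟨d, hd, j, hj, rfl⟩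
        obtain rfl : j = 0 := by omega
        exact ⟨d.1, hd.1, hd.2⟩
    | succ k ih =>
      intro hk
      have e : Yseq G M S (2*(k+1)+1) = NG G (NM M (Yseq G M S (2*k+1))) := by
        have h1 : Even (2*k+1+1) := by grind
        have h2 : ¬ Even (2*k+1) := by grind
        rw [show 2*(k+1)+1 = (2*k+1)+1+1 by ring, Yseq, if_pos h1, Yseq, if_neg h2]
      rw [e, ih (by omega), hNM k (by omega)]
      ext w
      constructor
      · rintro ⟨v, ⟨d, hd, j, hj, rfl⟩, hw⟩
        rcases (hT d hd).2.1 _ _ hw with h | h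
        · exact ⟨d, hd, j, by omega, h⟩
        · exact ⟨d, hd, j+1, by omega, h⟩
      · rintro ⟨d, hd, j, hj, rfl⟩
        rcases Nat.lt_or_ge k j with h | h
        · obtain rfl : j = k+1 := by omega
          exact ⟨_, ⟨d, hd, k, le_rfl, rfl⟩, (hT d hd).1 _⟩
        · exact ⟨_, ⟨d, hd, j, h, rfl⟩, ((hT d hd).1 _).symm⟩
  obtain ⟨m, hm⟩ : ∃ m, K = 2*m+2 := by
    obtain ⟨r, hr⟩ := hKeven
    exact ⟨r - 1, by omega⟩
  have hYK : Yseq G M S K = (fun x : (V × V) × ℕ => trW o x.1.1 x.1.2 (2*x.2+2)) ''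
      (D ×ˢ Set.Iio (m+1)) := by
    have h2 : ¬ Even (2*m+1) := by grind
    have : Yseq G M S K = NM M (Yseq G M S (2*m+1)) := by
      rw [hm, Yseq, if_neg h2]
    rw [this, hY m (by omega), hNM m (by omega)]
    ext w
    constructor
    · rintro ⟨d, hd, j, hj, rfl⟩
      exact ⟨(d, j), ⟨hd, Nat.lt_succ_of_le hj⟩, rfl⟩
    · rintro ⟨⟨d, j⟩, ⟨hd, hj⟩, rfl⟩
      exact ⟨d, hd, j, Nat.le_of_lt_succ hj, rfl⟩
  have hkey : ∀ d ∈ D, ∀ e ∈ D, ∀ i j, i ≤ j → j ≤ m →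
      trW o d.1 d.2 (2*i+2) = trW o e.1 e.2 (2*j+2) → d = e ∧ i = j := by
    intro d hd e he i j hij hj h
    have m1 := ((hE d hd).2 (2*i+1) (by omega)).2 ⟨i, rfl⟩
    have m2 := ((hE e he).2 (2*j+1) (by omega)).2 ⟨j, rfl⟩
    rw [Sym2.eq_swap] at m1 m2
    change s(trW o d.1 d.2 (2*i+2), _) ∈ M at m1
    change s(trW o e.1 e.2 (2*j+2), _) ∈ M at m2
    rw [← h] at m2
    have h' := matching_unique hM m1 m2
    obtain ⟨c, rfl⟩ : ∃ c, j = i + c := ⟨j - i, by omega⟩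
    have hb := trail_back (hT d hd) (hT e he) (2*i+1) 0 (2*c)
      (by rw [zero_add, h']; congr 1; omega)
      (by rw [zero_add]; refine h.trans ?_; congr 1; omega)
    rcases Nat.eq_zero_or_pos c with rfl | hc
    · exact ⟨Prod.ext hb.1 hb.2, rfl⟩
    · exfalso
      have h0 : ¬ coveredBy M (trW o d.1 d.2 0) := hd.1
      rw [hb.1] at h0
      exact h0 ((hE e he).1 _ (by omega) (by omega))
  rw [hYK, Set.ncard_image_of_injOn, Set.ncard_prod, ncard_darts G hdeg S, hm]
  · have : (Set.Iio (m+1)).ncard = m+1 := by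
      rw [Set.ncard_eq_toFinset_card']; simp
    rw [this]; ring
  · rintro ⟨d, i⟩ ⟨hd, hi⟩ ⟨e, j⟩ ⟨he, hj⟩ h
    have hi' : i < m + 1 := hi
    have hj' : j < m + 1 := hj
    rcases le_total i j with hl | hl
    · obtain ⟨rfl, rfl⟩ := hkey d hd e he i j hl (by omega) h
      rfl
    · obtain ⟨rfl, rfl⟩ := hkey e he d hd j i hl (by omega) h.symm
      rfl
end

section
/- Let K ≥ 2 be an even integer, let G be a finite simple bipartite graph in which every vertex has degree exactly 2, and let M be a matching in G having no augmenting paths of length ≤ 2K+1. Then K · u ≤ |V(G)|, where u is the number of vertices of G not covered by M and V(G) is the vertex set of G. -/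
structure IsW {V : Type*} (G : SimpleGraph V) (p : ℕ → V) : Prop where
  adj : ∀ i, G.Adj (p i) (p (i+1))
  ne : ∀ i, p (i+2) ≠ p i
  cl : ∀ i x, G.Adj (p (i+1)) x → x = p i ∨ x = p (i+2)

theorem IsW.back {V : Type*} {G : SimpleGraph V} {p q : ℕ → V} (hp : IsW G p) (hq : IsW G q)
    (a b k : ℕ) (h1 : p (a + k) = q (b + k)) (h2 : p (a + k + 1) = q (b + k + 1)) :
    p a = q b ∧ p (a+1) = q (b+1) := by
  induction k with
  | zero => exact ⟨h1, h2⟩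
  | succ k ih =>
    have h1' : p (a + k + 1) = q (b + k + 1) := h1
    have h2' : p (a + k + 2) = q (b + k + 2) := h2
    refine ih ?_ h1'
    have := hq.cl (b+k) (p (a+k)) (by rw [← h1']; exact (hp.adj _).symm)
    rcases this with h | h
    · exact h
    · exact absurd (h2'.trans h.symm) (hp.ne _)

theorem match_uniq {V : Type*} {G : SimpleGraph V} {M : Set (Sym2 V)} (hM : isMatching G M)
    {a b c : V} (h1 : s(a,b) ∈ M) (h2 : s(a,c) ∈ M) : b = c := by
  by_contra hbc
  refine hM.2 _ h1 _ h2 ?_ a ⟨by simp, by simp⟩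
  intro h
  rw [Sym2.congr_right] at h
  exact hbc h

theorem IsW.bip {V : Type*} {G : SimpleGraph V} {p : ℕ → V} (hp : IsW G p) {A : Set V}
    (hA : ∀ v w : V, G.Adj v w → (v ∈ A ↔ w ∉ A)) (i : ℕ) :
    p i ∈ A ↔ (p 0 ∈ A ↔ Even i) := by
  induction i with
  | zero => simp
  | succ i ih =>
    have := hA _ _ (hp.adj i)
    rw [Nat.even_add_one]
    tauto

theorem key {V : Type*} (G : SimpleGraph V) (M : Set (Sym2 V)) (L : ℕ)
    (hbip : isBipartite G) (hM : isMatching G M)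
    (hnoaug : ∀ (p : ℕ → V) (l : ℕ), l ≤ L → ¬ isAugPath G M p l)
    (p : ℕ → V) (hp : IsW G p) (h0 : ¬ coveredBy M (p 0)) (n : ℕ) (hn : 0 < n) (hnL : n ≤ L) :
    coveredBy M (p n) := by
  induction n using Nat.strong_induction_on with
  | _ n ih =>
  by_contra hc
  have hcov : ∀ m, 0 < m → m < n → coveredBy M (p m) := fun m h1 h2 => ih m h2 h1 (by omega)
  obtain ⟨A, hA⟩ := hbip
  have alt : ∀ i < n, (s(p i, p (i+1)) ∈ M ↔ Odd i) := by
    intro i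
    induction i with
    | zero =>
      intro _
      simp only [Nat.not_odd_zero, iff_false]
      exact fun h => h0 ⟨_, h, by simp⟩
    | succ i ih2 =>
      intro hi
      have ih3 := ih2 (by omega)
      rw [Nat.odd_add_one, ← ih3]
      constructor
      · intro h h'
        rw [Sym2.eq_swap] at h'
        exact hp.ne i (match_uniq hM h h')
      · intro h
        obtain ⟨e, he, hv⟩ := hcov (i+1) (by omega) hi
        obtain ⟨x, rfl⟩ := Sym2.mem_iff_exists.1 hv
        rcases hp.cl i x (hM.1 he) with rfl | rfl
        · rw [Sym2.eq_swap] at he; exact absurd he h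
        · exact he
  have hodd : Odd n := by
    obtain ⟨m, rfl⟩ : ∃ m, n = m + 1 := ⟨n-1, by omega⟩
    rw [Nat.odd_add_one, ← alt m (by omega)]
    exact fun h => hc ⟨_, h, by simp⟩
  have par : ∀ i j, p i = p j → (Even i ↔ Even j) := by
    intro i j h
    have h1 := hp.bip hA i
    have h2 := hp.bip hA j
    rw [h] at h1
    tauto
  have inj : ∀ i j, i < j → j ≤ n → p i ≠ p j := by
    intro i j hij hj h
    have hpar := par i j h
    rcases Nat.eq_zero_or_pos i with rfl | hi
    · rcases hj.lt_or_eq with hj | rfl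
      · exact h0 (h ▸ hcov j hij hj)
      · rw [← Nat.not_even_iff_odd] at hodd
        simp at hpar; exact hodd hpar
    · rcases hj.lt_or_eq with hj | rfl
      · have fin : p 0 = p (j - i) → False := fun h => h0 (h ▸ hcov (j-i) (by omega) (by omega))
        by_cases ho : Odd i
        · have ho' : Odd j := by rw [← Nat.not_even_iff_odd] at *; tauto
          have e1 := (alt i (by omega)).2 ho
          have e2 := (alt j hj).2 ho'
          rw [← h] at e2
          have := match_uniq hM e1 e2
          refine fin (hp.back hp 0 (j-i) i ?_ ?_).1
          · rw [Nat.sub_add_cancel hij.le, Nat.zero_add]; exact h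
          · rw [Nat.sub_add_cancel hij.le, Nat.zero_add]; exact this
        · have ho' : ¬ Odd j := by rw [Nat.not_odd_iff_even] at *; tauto
          obtain ⟨k, rfl⟩ : ∃ m, i = m + 1 := ⟨i-1, by omega⟩
          obtain ⟨l, rfl⟩ : ∃ m, j = m + 1 := ⟨j-1, by omega⟩
          have e1 := (alt k (by omega)).2 (by rw [Nat.odd_add_one] at ho; tauto)
          have e2 := (alt l (by omega)).2 (by rw [Nat.odd_add_one] at ho'; tauto)
          rw [← h] at e2
          rw [Sym2.eq_swap] at e1 e2
          have := match_uniq hM e1 e2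
          have hs : l + 1 - (k + 1) + k = l := by omega
          refine fin (hp.back hp 0 (l+1-(k+1)) k ?_ ?_).1
          · rw [hs, Nat.zero_add]; exact this
          · rw [hs, Nat.zero_add]; exact h
      · exact hc (h ▸ hcov i hi hij)
  refine hnoaug p n hnL ⟨hodd, fun i _ => hp.adj i, ?_, h0, hc, alt⟩
  intro i hi j hj h
  rcases lt_trichotomy i j with hl | hl | hl
  · exact absurd h (inj i j hl hj)
  · exact hl
  · exact absurd h.symm (inj j i hl hi)

theorem exists_walk {V : Type*} (G : SimpleGraph V)
    (hdeg : ∀ v : V, (G.neighborSet v).ncard = 2) (v w : V) (h : G.Adj v w) :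
    ∃ p : ℕ → V, IsW G p ∧ p 0 = v ∧ p 1 = w := by
  have ho : ∀ v w : V, ∃ x, G.Adj v w → G.Adj w x ∧ x ≠ v ∧
      ∀ y, G.Adj w y → y = v ∨ y = x := by
    intro v w
    by_cases h : G.Adj v w
    · obtain ⟨a, b, hab, hs⟩ := Set.ncard_eq_two.1 (hdeg w)
      have hm : ∀ y, G.Adj w y ↔ y = a ∨ y = b := by
        intro y
        rw [← SimpleGraph.mem_neighborSet, hs]; simp
      rcases (hm v).1 h.symm with rfl | rfl
      · exact ⟨b, fun _ => ⟨(hm b).2 (Or.inr rfl), hab.symm, fun y => (hm y).1⟩⟩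
      · exact ⟨a, fun _ => ⟨(hm a).2 (Or.inl rfl), hab, fun y hy => ((hm y).1 hy).symm⟩⟩
    · exact ⟨v, fun h' => absurd h' h⟩
  choose o ho using ho
  let σ : V × V → V × V := fun d => (d.2, o d.1 d.2)
  let q : ℕ → V × V := fun n => σ^[n] (v, w)
  have hq : ∀ n, q (n+1) = σ (q n) := fun n => Function.iterate_succ_apply' σ n (v, w)
  have h1 : ∀ n, (q (n+1)).1 = (q n).2 := fun n => by rw [hq]
  have h2 : ∀ n, (q (n+2)).1 = o (q n).1 (q (n+1)).1 := fun n => by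
    rw [h1 (n+1), h1 n, hq]
  have adj : ∀ n, G.Adj (q n).1 (q (n+1)).1 := by
    intro n
    induction n with
    | zero => rw [h1]; exact h
    | succ n ih => rw [h2 n]; exact (ho _ _ ih).1
  refine ⟨fun n => (q n).1, ⟨adj, ?_, ?_⟩, rfl, rfl⟩
  · intro i
    change (q (i+2)).1 ≠ (q i).1
    rw [h2 i]; exact (ho _ _ (adj i)).2.1
  · intro i x hx
    change x = (q i).1 ∨ x = (q (i+2)).1
    rw [h2 i]; exact (ho _ _ (adj i)).2.2 x hx

/-- In a finite 2-regular bipartite graph with a matching `M` having no augmenting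
paths of length ≤ 2K+1 (K ≥ 2 even), `K · u ≤ |V(G)|` where `u` is the number of vertices
not covered by `M`. -/
theorem stmt1 {V : Type*} [Fintype V] (G : SimpleGraph V) (M : Set (Sym2 V))
    (K : ℕ) (hK2 : 2 ≤ K) (hKeven : Even K)
    (hbip : isBipartite G)
    (hdeg : ∀ v : V, (G.neighborSet v).ncard = 2)
    (hM : isMatching G M)
    (hnoaug : ∀ (p : ℕ → V) (l : ℕ), l ≤ 2 * K + 1 → ¬ isAugPath G M p l) :
    K * ({v : V | ¬ coveredBy M v}).ncard ≤ Fintype.card V := by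
  classical
  have hW := fun v w => exists_walk G hdeg v w
  have hk := key G M (2*K+1) hbip hM hnoaug
  let D := Σ v : V, G.neighborSet v
  let S := Σ v : {v : V // ¬ coveredBy M v}, G.neighborSet v.1
  have hc2 : ∀ v : V, Fintype.card (G.neighborSet v) = 2 := by
    intro v
    rw [← hdeg v, Set.ncard_eq_toFinset_card', Set.toFinset_card]
  have hD : Fintype.card D = Fintype.card V * 2 := by
    simp only [D, Fintype.card_sigma, hc2]; simp
  have hS : Fintype.card S = ({v : V | ¬ coveredBy M v}).ncard * 2 := by
    simp only [S, Fintype.card_sigma, hc2]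
    rw [Finset.sum_const, smul_eq_mul, Finset.card_univ, ← Nat.card_eq_fintype_card]
    rfl
  choose p hp hp0 hp1 using hW
  let P : S → ℕ → V := fun s => p s.1.1 s.2.1 s.2.2
  have hP : ∀ s, IsW G (P s) := fun s => hp _ _ _
  have hP0 : ∀ s, P s 0 = s.1.1 := fun s => hp0 _ _ _
  have hP1 : ∀ s, P s 1 = s.2.1 := fun s => hp1 _ _ _
  have hSext : ∀ s t : S, P s 0 = P t 0 → P s 1 = P t 1 → s = t := by
    intro s t h0 h1
    rw [hP0, hP0] at h0
    rw [hP1, hP1] at h1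
    obtain ⟨⟨v, hv⟩, ⟨w, hw⟩⟩ := s
    obtain ⟨⟨v', hv'⟩, ⟨w', hw'⟩⟩ := t
    simp only at h0 h1
    subst h0; subst h1; rfl
  let F : S × Fin K → D := fun x => ⟨P x.1 x.2, ⟨P x.1 (x.2 + 1), (hP x.1).adj x.2⟩⟩
  have main : ∀ (s t : S) (i j : ℕ), i ≤ j → j < K → P s i = P t j →
      P s (i+1) = P t (j+1) → s = t ∧ i = j := by
    intro s t i j hij hj h1 h2
    have hb := (hP s).back (hP t) 0 (j-i) i
      (by rw [Nat.zero_add, Nat.sub_add_cancel hij]; exact h1)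
      (by rw [Nat.zero_add, Nat.sub_add_cancel hij]; exact h2)
    rcases hij.lt_or_eq with hlt | rfl
    · exfalso
      have := hk (P t) (hP t) (by rw [hP0]; exact t.1.2) (j-i) (by omega) (by omega)
      rw [← hb.1, hP0] at this
      exact s.1.2 this
    · rw [Nat.sub_self] at hb
      exact ⟨hSext s t hb.1 hb.2, rfl⟩
  have hF : Function.Injective F := by
    rintro ⟨s, i⟩ ⟨t, j⟩ h
    have h1 : P s i = P t j := congrArg (fun d : D => d.1) h
    have h2 : P s (i+1) = P t (j+1) := congrArg (fun d : D => d.2.1) h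
    rcases le_total i.1 j.1 with hl | hl
    · obtain ⟨a, b⟩ := main s t i j hl j.2 h1 h2
      exact Prod.ext a (Fin.ext b)
    · obtain ⟨a, b⟩ := main t s j i hl i.2 h1.symm h2.symm
      exact Prod.ext a.symm (Fin.ext b.symm)
  have := Fintype.card_le_of_injective F hF
  rw [Fintype.card_prod, hS, hD, Fintype.card_fin] at this
  nlinarith
end

section
/- Let K ≥ 2 be an even integer, let G be a finite simple bipartite graph in which every vertex has degree 1 or 2, and let M be a matching in G having no augmenting paths of length ≤ 2K+1. Then K · u ≤ |V(G)| + K · D, where u is the number of vertices of G not covered by M, V(G) is the vertex set of G, and D is the number of vertices of G of degree 1. -/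
def altR {V : Type*} (G : SimpleGraph V) (M : Set (Sym2 V)) (x y : V) : Prop :=
  ∃ w, G.Adj x w ∧ s(x, w) ∉ M ∧ s(w, y) ∈ M

def altI {V : Type*} (G : SimpleGraph V) (M : Set (Sym2 V)) : ℕ → V → V → Prop
  | 0, x, y => x = y
  | (n+1), x, y => ∃ z, altI G M n x z ∧ altR G M z y

lemma mate_unique {V : Type*} {G : SimpleGraph V} {M : Set (Sym2 V)} (hM : isMatching G M)
    {w w' y : V} (h : s(w, y) ∈ M) (h' : s(w', y) ∈ M) : w = w' := by
  by_contra hne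
  refine hM.2 _ h _ h' ?_ y ⟨by simp, by simp⟩
  intro he
  simp only [Sym2.eq_iff] at he
  grind

lemma altR_unique {V : Type*} [Fintype V] {G : SimpleGraph V} {M : Set (Sym2 V)}
    (hdeg : ∀ v : V, (G.neighborSet v).ncard = 1 ∨ (G.neighborSet v).ncard = 2)
    (hM : isMatching G M) {x x' y : V} (h : altR G M x y) (h' : altR G M x' y) : x = x' := by
  obtain ⟨w, h1, h2, h3⟩ := h
  obtain ⟨w', h1', h2', h3'⟩ := h'
  obtain rfl := mate_unique hM h3 h3'
  by_contra hne
  have hy : G.Adj w y := hM.1 h3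
  have hxy : x ≠ y := by rintro rfl; exact h2 (Sym2.eq_swap ▸ h3)
  have hxy' : x' ≠ y := by rintro rfl; exact h2' (Sym2.eq_swap ▸ h3)
  have hsub : ({x, x', y} : Set V) ⊆ G.neighborSet w := by
    intro z hz
    simp only [Set.mem_insert_iff, Set.mem_singleton_iff] at hz
    rcases hz with rfl | rfl | rfl
    · exact h1.symm
    · exact h1'.symm
    · exact hy
  have hc := Set.ncard_le_ncard hsub (Set.toFinite _)
  have h3 : ({x, x', y} : Set V).ncard = 3 := Set.ncard_eq_three.2 ⟨x, x', y, hne, hxy, hxy', rfl⟩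
  rcases hdeg w with h | h <;> omega

lemma altR_cov {V : Type*} {G : SimpleGraph V} {M : Set (Sym2 V)} {x y : V}
    (h : altR G M x y) : coveredBy M y := by
  obtain ⟨w, -, -, h⟩ := h
  exact ⟨_, h, by simp⟩

lemma altI_unique {V : Type*} [Fintype V] {G : SimpleGraph V} {M : Set (Sym2 V)}
    (hdeg : ∀ v : V, (G.neighborSet v).ncard = 1 ∨ (G.neighborSet v).ncard = 2)
    (hM : isMatching G M) {v v' : V} (hv : ¬ coveredBy M v) (hv' : ¬ coveredBy M v') :
    ∀ (i j : ℕ) (x : V), altI G M i v x → altI G M j v' x → v = v' ∧ i = j := by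
  intro i
  induction i with
  | zero =>
    intro j x h h'
    cases j with
    | zero => exact ⟨h.trans h'.symm, rfl⟩
    | succ j =>
      obtain ⟨z, -, h'⟩ := h'
      have : v = x := h
      subst this
      exact absurd (altR_cov h') hv
  | succ i ih =>
    intro j x h h'
    obtain ⟨z, h1, h2⟩ := h
    cases j with
    | zero =>
      have : v' = x := h'
      subst this
      exact absurd (altR_cov h2) hv'
    | succ j =>
      obtain ⟨z', h1', h2'⟩ := h'
      obtain rfl := altR_unique hdeg hM h2 h2'
      obtain ⟨a, b⟩ := ih j z h1 h1'
      exact ⟨a, by omega⟩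

lemma altI_seq {V : Type*} {G : SimpleGraph V} {M : Set (Sym2 V)} {v : V} :
    ∀ (k : ℕ) (z w : V), altI G M k v z → ∃ a b : ℕ → V, a 0 = v ∧ a k = z ∧ b k = w ∧
      (∀ i ≤ k, altI G M i v (a i)) ∧
      ∀ i < k, G.Adj (a i) (b i) ∧ s(a i, b i) ∉ M ∧ s(b i, a (i+1)) ∈ M := by
  intro k
  induction k with
  | zero =>
    intro z w h
    refine ⟨fun _ => v, fun _ => w, rfl, h, rfl, ?_, by simp⟩
    intro i hi
    obtain rfl : i = 0 := by omega
    rfl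
  | succ k ih =>
    intro z w h
    obtain ⟨y, h1, u, h2⟩ := id h
    obtain ⟨a, b, h0, hk, hb, hI, hs⟩ := ih y u h1
    refine ⟨fun i => if i ≤ k then a i else z, fun i => if i ≤ k then b i else w,
      by simp [h0], by simp, by simp, ?_, ?_⟩
    · intro i hi
      by_cases hik : i ≤ k
      · simpa [hik] using hI i hik
      · obtain rfl : i = k + 1 := by omega
        simpa using h
    · intro i hi
      by_cases hik : i < k
      · have e1 : i ≤ k := by omega
        have e2 : i + 1 ≤ k := by omega
        simpa [e1, e2] using hs i hik
      · obtain rfl : i = k := by omega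
        simpa [hk, hb] using h2

lemma no_aug {V : Type*} [Fintype V] {G : SimpleGraph V} {M : Set (Sym2 V)} {K : ℕ}
    (hbip : isBipartite G)
    (hdeg : ∀ v : V, (G.neighborSet v).ncard = 1 ∨ (G.neighborSet v).ncard = 2)
    (hM : isMatching G M)
    (hnoaug : ∀ (p : ℕ → V) (l : ℕ), l ≤ 2 * K + 1 → ¬ isAugPath G M p l)
    {v z w : V} (hv : ¬ coveredBy M v) {k : ℕ} (hk : k ≤ K) (h : altI G M k v z)
    (hzw : G.Adj z w) (hzwM : s(z, w) ∉ M) : coveredBy M w := by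
  by_contra hw
  obtain ⟨a, b, h0, hak, hbk, hI, hs⟩ := altI_seq k z w h
  obtain ⟨A, hA⟩ := hbip
  have hadj : ∀ i ≤ k, G.Adj (a i) (b i) ∧ s(a i, b i) ∉ M := by
    intro i hi
    by_cases hik : i < k
    · exact ⟨(hs i hik).1, (hs i hik).2.1⟩
    · obtain rfl : i = k := by omega
      rw [hak, hbk]; exact ⟨hzw, hzwM⟩
  have hadj' : ∀ i < k, G.Adj (b i) (a (i+1)) := fun i hi => hM.1 (hs i hi).2.2
  have hpa : ∀ i ≤ k, (a i ∈ A ↔ v ∈ A) := by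
    intro i
    induction i with
    | zero => intro _; rw [h0]
    | succ i ih =>
      intro hi
      have := ih (by omega)
      have h1 := hA _ _ (hadj i (by omega)).1
      have h2 := hA _ _ (hadj' i (by omega))
      tauto
  have hpb : ∀ i ≤ k, (b i ∈ A ↔ v ∉ A) := by
    intro i hi
    have := hpa i hi
    have h1 := hA _ _ (hadj i hi).1
    tauto
  have hab : ∀ i ≤ k, ∀ j ≤ k, a i ≠ b j := by
    intro i hi j hj he
    have h1 := hpa i hi
    have h2 := hpb j hj
    rw [he] at h1
    tauto
  have haa : ∀ i ≤ k, ∀ j ≤ k, a i = a j → i = j := by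
    intro i hi j hj he
    exact (altI_unique hdeg hM hv hv i j (a i) (hI i hi) (he ▸ hI j hj)).2
  have hbcov : ∀ i < k, coveredBy M (b i) := fun i hi => ⟨_, (hs i hi).2.2, by simp⟩
  have hbb : ∀ i ≤ k, ∀ j ≤ k, b i = b j → i = j := by
    intro i hi j hj he
    by_cases hik : i < k
    · by_cases hjk : j < k
      · have h1 := (hs i hik).2.2
        have h2 := (hs j hjk).2.2
        rw [← he] at h2
        rw [Sym2.eq_swap] at h1 h2
        have := haa _ (by omega) _ (by omega) (mate_unique hM h1 h2)
        omega
      · obtain rfl : j = k := by omega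
        exact absurd (hbk ▸ he ▸ hbcov i hik) hw
    · obtain rfl : i = k := by omega
      by_cases hjk : j < i
      · exact absurd (hbk ▸ he ▸ hbcov j hjk) hw
      · omega
  let p : ℕ → V := fun n => if n % 2 = 0 then a (n / 2) else b (n / 2)
  have pe : ∀ i, p (2 * i) = a i := by intro i; simp [p]
  have po : ∀ i, p (2 * i + 1) = b i := by
    intro i
    have e1 : (2 * i + 1) % 2 = 1 := by omega
    have e2 : (2 * i + 1) / 2 = i := by omega
    simp [p, e1, e2]
  have po' : ∀ i, p (2 * i + 1 + 1) = a (i + 1) := by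
    intro i; rw [← pe]; rfl
  refine hnoaug p (2 * k + 1) (by omega) ⟨⟨k, rfl⟩, ?_, ?_, ?_, ?_, ?_⟩
  · intro n hn
    obtain ⟨i, rfl | rfl⟩ := Nat.even_or_odd' n
    · rw [pe, po]; exact (hadj i (by omega)).1
    · rw [po, po']; exact hadj' i (by omega)
  · intro n hn m hm he
    obtain ⟨i, rfl | rfl⟩ := Nat.even_or_odd' n <;> obtain ⟨j, rfl | rfl⟩ := Nat.even_or_odd' m
    · rw [pe, pe] at he
      rw [haa i (by omega) j (by omega) he]
    · rw [pe, po] at he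
      exact absurd he (hab i (by omega) j (by omega))
    · rw [pe, po] at he
      exact absurd he.symm (hab j (by omega) i (by omega))
    · rw [po, po] at he
      rw [hbb i (by omega) j (by omega) he]
  · have := pe 0
    rw [mul_zero] at this
    rw [this, h0]; exact hv
  · rw [po, hbk]; exact hw
  · intro n hn
    obtain ⟨i, rfl | rfl⟩ := Nat.even_or_odd' n
    · rw [pe, po]
      have h1 := (hadj i (by omega)).2
      have h2 : ¬ Odd (2 * i) := by simp
      tauto
    · rw [po, po']
      have h1 := (hs i (by omega)).2.2
      have h2 : Odd (2 * i + 1) := ⟨i, rfl⟩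
      tauto

lemma alt_step {V : Type*} [Fintype V] {G : SimpleGraph V} {M : Set (Sym2 V)} {K : ℕ}
    (hbip : isBipartite G)
    (hdeg : ∀ v : V, (G.neighborSet v).ncard = 1 ∨ (G.neighborSet v).ncard = 2)
    (hM : isMatching G M)
    (hnoaug : ∀ (p : ℕ → V) (l : ℕ), l ≤ 2 * K + 1 → ¬ isAugPath G M p l)
    {v : V} (hv : ¬ coveredBy M v) :
    ∀ k ≤ K, (∃ x, altI G M k v x) ∨ ∃ d j, (G.neighborSet d).ncard = 1 ∧ altI G M j v d := by
  intro k
  induction k with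
  | zero => intro _; exact Or.inl ⟨v, rfl⟩
  | succ k ih =>
    intro hk
    rcases ih (by omega) with ⟨z, hz⟩ | h
    · rcases hdeg z with h1 | h2
      · exact Or.inr ⟨z, k, h1, hz⟩
      · left
        obtain ⟨s, t, hst, hN⟩ := Set.ncard_eq_two.1 h2
        have hs : G.Adj z s := by
          have : s ∈ G.neighborSet z := by rw [hN]; simp
          exact this
        have ht : G.Adj z t := by
          have : t ∈ G.neighborSet z := by rw [hN]; simp
          exact this
        obtain ⟨w, hw, hwM⟩ : ∃ w, G.Adj z w ∧ s(z, w) ∉ M := by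
          by_cases h1 : s(z, s) ∈ M
          · refine ⟨t, ht, fun h2 => hst ?_⟩
            rw [Sym2.eq_swap] at h1 h2
            exact mate_unique hM h1 h2
          · exact ⟨s, hs, h1⟩
        obtain ⟨e, he, hwe⟩ := no_aug hbip hdeg hM hnoaug hv (by omega) hz hw hwM
        obtain ⟨y, rfl⟩ := hwe
        exact ⟨y, z, hz, w, hw, hwM, he⟩
    · exact Or.inr h

/-- In a finite bipartite graph all of whose vertices have degree 1 or 2, with a
matching `M` having no augmenting paths of length ≤ 2K+1 (K ≥ 2 even),
`K · u ≤ |V(G)| + K · D` where `u` is the number of uncovered vertices and `D` the number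
of degree-1 vertices. -/
theorem stmt2 {V : Type*} [Fintype V] (G : SimpleGraph V) (M : Set (Sym2 V))
    (K : ℕ) (hK2 : 2 ≤ K) (hKeven : Even K)
    (hbip : isBipartite G)
    (hdeg : ∀ v : V, (G.neighborSet v).ncard = 1 ∨ (G.neighborSet v).ncard = 2)
    (hM : isMatching G M)
    (hnoaug : ∀ (p : ℕ → V) (l : ℕ), l ≤ 2 * K + 1 → ¬ isAugPath G M p l) :
    K * ({v : V | ¬ coveredBy M v}).ncard
      ≤ Fintype.card V + K * ({v : V | (G.neighborSet v).ncard = 1}).ncard := by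
  classical
  let U : Set V := {v : V | ¬ coveredBy M v}
  let D : Set V := {v : V | (G.neighborSet v).ncard = 1}
  have key : ∀ q : U × Fin K, ∃ r : V ⊕ (D × Fin K),
      (∀ x, r = Sum.inl x → altI G M q.2 q.1 x) ∧
      (∀ d i, r = Sum.inr (d, i) → i = q.2 ∧ ∃ j, altI G M j q.1 d) := by
    rintro ⟨⟨v, hv⟩, i⟩
    rcases alt_step hbip hdeg hM hnoaug hv i i.2.le with ⟨x, hx⟩ | ⟨d, j, hd, hj⟩
    · refine ⟨Sum.inl x, ?_, ?_⟩
      · rintro y hy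
        obtain rfl := Sum.inl.inj hy
        exact hx
      · rintro d i h; cases h
    · refine ⟨Sum.inr (⟨d, hd⟩, i), ?_, ?_⟩
      · rintro y hy; cases hy
      · rintro d' i' h
        obtain ⟨rfl, rfl⟩ := Prod.mk.inj (Sum.inr.inj h)
        exact ⟨rfl, j, hj⟩
  choose F hF1 hF2 using key
  have hinj : Function.Injective F := by
    intro q q' he
    have hu := fun i j x h h' => altI_unique hdeg hM q.1.2 q'.1.2 i j x h h'
    rcases hr : F q with x | ⟨d, i⟩
    · obtain ⟨h1, h2⟩ := hu _ _ x (hF1 q x hr) (hF1 q' x (he ▸ hr))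
      exact Prod.ext (Subtype.ext h1) (Fin.ext h2)
    · obtain ⟨h1, j, h2⟩ := hF2 q d i hr
      obtain ⟨h1', j', h2'⟩ := hF2 q' d i (he ▸ hr)
      exact Prod.ext (Subtype.ext (hu _ _ _ h2 h2').1) (h1.symm.trans h1')
  have hc := Nat.card_le_card_of_injective F hinj
  rw [Nat.card_prod, Nat.card_sum, Nat.card_prod, Nat.card_eq_fintype_card (α := Fin K),
    Fintype.card_fin, Nat.card_eq_fintype_card (α := V), Nat.card_coe_set_eq,
    Nat.card_coe_set_eq, mul_comm, mul_comm D.ncard] at hc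
  exact hc
end

section
/- Let K ≥ 2 be an even integer, let G be a finite simple bipartite graph in which every vertex has degree exactly 2, let M be a matching in G having no augmenting paths of length ≤ 2K+1, and let v be a vertex not covered by M. Then for every odd l with 1 ≤ l ≤ K−1, every vertex of X_l(v) is covered by M. -/
/-- Walk step of the layered sequence. -/
def walkStep {V : Type*} (G : SimpleGraph V) (M : Set (Sym2 V)) (i : ℕ) (a b : V) : Prop :=
  (Even i → G.Adj a b) ∧ (Odd i → s(a, b) ∈ M)

lemma yseq_walk {V : Type*} (G : SimpleGraph V) (M : Set (Sym2 V)) (v : V) :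
    ∀ (n : ℕ) (x : V), x ∈ Yseq G M {v} n →
      ∃ p : ℕ → V, p 0 = v ∧ p n = x ∧ ∀ i < n, walkStep G M i (p i) (p (i+1)) := by
  intro n
  induction n with
  | zero =>
    intro x hx
    have hx' : x = v := hx
    exact ⟨fun _ => v, rfl, hx'.symm, by intro i hi; omega⟩
  | succ n ih =>
    intro x hx
    have key : ∃ y ∈ Yseq G M {v} n, walkStep G M n y x := by
      rw [Yseq] at hx
      split_ifs at hx with h
      · obtain ⟨y, hy, hyx⟩ := hx
        exact ⟨y, hy, fun _ => hyx, fun ho => absurd h (Nat.not_even_iff_odd.2 ho)⟩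
      · obtain ⟨y, hy, hyx⟩ := hx
        exact ⟨y, hy, fun he => absurd he h, fun _ => hyx⟩
    obtain ⟨y, hy, hs⟩ := key
    obtain ⟨p, h0, hn, hp⟩ := ih y hy
    refine ⟨fun k => if k ≤ n then p k else x, by simp [h0], by simp, ?_⟩
    intro i hi
    rcases Nat.lt_or_ge i n with h | h
    · have h1 : i ≤ n := h.le
      have h2 : i + 1 ≤ n := h
      simpa only [h1, h2, if_true] using hp i h
    · have : i = n := by omega
      subst this
      simpa [hn] using hs

/-- In a finite 2-regular bipartite graph with matching `M` having no augmenting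
paths of length ≤ 2K+1 (K ≥ 2 even) and `v` uncovered, for every odd `l` with
`1 ≤ l ≤ K-1` every vertex of `X_l(v)` is covered by `M`. -/
theorem stmt3 {V : Type*} [Fintype V] (G : SimpleGraph V) (M : Set (Sym2 V))
    (K : ℕ) (hK2 : 2 ≤ K) (hKeven : Even K)
    (hbip : isBipartite G)
    (hdeg : ∀ v : V, (G.neighborSet v).ncard = 2)
    (hM : isMatching G M)
    (hnoaug : ∀ (p : ℕ → V) (l : ℕ), l ≤ 2 * K + 1 → ¬ isAugPath G M p l)
    (v : V) (hv : ¬ coveredBy M v) :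
    ∀ l : ℕ, Odd l → 1 ≤ l → l ≤ K - 1 →
      ∀ u ∈ Yseq G M {v} l, coveredBy M u := by
  classical
  intro l hlodd _ hlK u hu
  by_contra huc
  obtain ⟨A, hA⟩ := hbip
  let P : ℕ → Prop := fun n => Odd n ∧ ∃ p : ℕ → V, p 0 = v ∧ ¬ coveredBy M (p n) ∧
    ∀ i < n, walkStep G M i (p i) (p (i+1))
  have hPl : P l := by
    obtain ⟨p, h0, hn, hp⟩ := yseq_walk G M v l u hu
    exact ⟨hlodd, p, h0, by rwa [hn], hp⟩
  have hex : ∃ n, P n := ⟨l, hPl⟩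
  obtain ⟨hodd, p, h0, hunc, hp⟩ := Nat.find_spec hex
  have hmin : ∀ m, m < Nat.find hex → ¬ P m := fun m hm => Nat.find_min hex hm
  have hle : Nat.find hex ≤ l := Nat.find_min' hex hPl
  generalize Nat.find hex = n at *
  have hadj : ∀ i < n, G.Adj (p i) (p (i+1)) := by
    intro i hi
    rcases Nat.even_or_odd i with h | h
    · exact (hp i hi).1 h
    · exact hM.1 ((hp i hi).2 h)
  have hpar : ∀ i ≤ n, (p i ∈ A ↔ (Even i ↔ v ∈ A)) := by
    intro i
    induction i with
    | zero => intro _; simp [h0]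
    | succ i ih =>
      intro hi
      have h1 := ih (by omega)
      have h2 := hA _ _ (hadj i (by omega))
      rw [Nat.even_add_one]
      tauto
  have hlt : ∀ i j, i < j → j ≤ n → p i ≠ p j := by
    intro i j hij hj he
    have h1 := hpar i (by omega)
    have h2 := hpar j hj
    rw [he] at h1
    have hev : Even i ↔ Even j := by tauto
    obtain ⟨d, hd⟩ : ∃ d, j = i + d := ⟨j - i, by omega⟩
    subst hd
    have hde : Even d := by
      rw [Nat.even_add] at hev; tauto
    apply hmin (n - d) (by omega)
    refine ⟨?_, fun k => if k ≤ i then p k else p (k + d), by simp [h0], ?_, ?_⟩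
    · exact Nat.Odd.sub_even (by omega) hodd hde
    · have : (if n - d ≤ i then p (n - d) else p (n - d + d)) = p n := by
        split_ifs with h
        · have e1 : n - d = i := by omega
          have e2 : i + d = n := by omega
          rw [e1, he, e2]
        · congr 1; omega
      simpa only [this] using hunc
    · intro k hk
      rcases lt_trichotomy k i with h | h | h
      · have a1 : k ≤ i := by omega
        have a2 : k + 1 ≤ i := by omega
        simpa only [a1, a2, if_true] using hp k (by omega)
      · subst h
        have a2 : ¬ (k + 1 ≤ k) := by omega
        have hs := hp (k + d) (by omega)
        simp only [le_refl, a2, if_true, if_false]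
        have e : k + 1 + d = k + d + 1 := by omega
        rw [e, he]
        exact ⟨fun q => hs.1 (q.add hde), fun q => hs.2 (q.add_even hde)⟩
      · have a1 : ¬ k ≤ i := by omega
        have a2 : ¬ k + 1 ≤ i := by omega
        have hs := hp (k + d) (by omega)
        simp only [a1, a2, if_false]
        have e : k + 1 + d = k + d + 1 := by omega
        rw [e]
        exact ⟨fun q => hs.1 (q.add hde), fun q => hs.2 (q.add_even hde)⟩
  refine hnoaug p n (by omega) ⟨hodd, hadj, ?_, by rwa [h0], hunc, ?_⟩
  · intro i hi j hj he
    rcases lt_trichotomy i j with h | h | h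
    · exact absurd he (hlt i j h hj)
    · exact h
    · exact absurd he.symm (hlt j i h hi)
  · intro i hi
    refine ⟨fun hm => ?_, (hp i hi).2⟩
    by_contra hno
    rw [Nat.not_odd_iff_even] at hno
    cases i with
    | zero => exact hv ⟨_, hm, by simp [h0]⟩
    | succ i =>
      have hio : Odd i := by
        rw [Nat.even_add_one, Nat.not_even_iff_odd] at hno; exact hno
      have hm' := (hp i (by omega)).2 hio
      have heq : s(p i, p (i+1)) = s(p (i+1), p (i+1+1)) := by
        by_contra hne
        exact hM.2 _ hm' _ hm hne (p (i+1)) ⟨by simp, by simp⟩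
      rw [Sym2.eq_swap] at heq
      have := Sym2.congr_right.1 heq
      exact hlt i (i+1+1) (by omega) (by omega) this
end

section
/- Let K ≥ 2 be an even integer, let G be a finite simple bipartite graph in which every vertex has degree 1 or 2, let M be a matching in G having no augmenting paths of length ≤ 2K+1, and let v and w be two distinct vertices not covered by M. Then there is no vertex u of degree 1 in G with u ∈ ⋃_{l=0}^{K} X_l(v) and u ∈ ⋃_{l=0}^{K} X_l(w). -/
def AltW {V : Type*} (G : SimpleGraph V) (M : Set (Sym2 V)) (v w : V) (p : ℕ → V) (l : ℕ) : Prop :=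
  p 0 = v ∧ p l = w ∧ ∀ i < l, G.Adj (p i) (p (i+1)) ∧ (Odd i → s(p i, p (i+1)) ∈ M)

theorem exists_altW {V : Type*} {G : SimpleGraph V} {M : Set (Sym2 V)} (hM : isMatching G M)
    (v : V) (l : ℕ) : ∀ x, x ∈ Yseq G M {v} l → ∃ p, AltW G M v x p l := by
  induction l with
  | zero =>
    intro x hx
    simp only [Yseq, Set.mem_singleton_iff] at hx
    exact ⟨fun _ => x, by simp [hx], rfl, by intro i hi; omega⟩
  | succ l ih =>
    intro x hx
    have key : ∃ y ∈ Yseq G M {v} l, G.Adj y x ∧ (Odd l → s(y, x) ∈ M) := by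
      rw [Yseq] at hx
      split_ifs at hx with h
      · obtain ⟨y, hy, hyx⟩ := hx
        exact ⟨y, hy, hyx, fun ho => absurd h (Nat.not_even_iff_odd.2 ho)⟩
      · obtain ⟨y, hy, hyx⟩ := hx
        exact ⟨y, hy, by simpa using hM.1 hyx, fun _ => hyx⟩
    obtain ⟨y, hy, ha, hm⟩ := key
    obtain ⟨p, h0, hl, hp⟩ := ih y hy
    refine ⟨fun i => if i ≤ l then p i else x, by simp [h0], by simp, ?_⟩
    intro i hi
    rcases Nat.lt_succ_iff_lt_or_eq.1 hi with h | h
    · simpa [h.le, Nat.succ_le_of_lt h] using hp i h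
    · subst h
      simpa [hl] using ⟨ha, hm⟩

theorem match_unique {V : Type*} {G : SimpleGraph V} {M : Set (Sym2 V)} (hM : isMatching G M)
    {x y z : V} (h1 : s(x, y) ∈ M) (h2 : s(x, z) ∈ M) : y = z := by
  by_contra hne
  refine hM.2 _ h1 _ h2 ?_ x (by simp)
  intro h
  apply hne
  have h' : y = z ∨ x = z ∧ y = x := by simpa using h
  rcases h' with h' | ⟨h1, h2⟩
  · exact h'
  · exact h2.trans h1

theorem no_even_even {V : Type*} [Finite V] {G : SimpleGraph V} {M : Set (Sym2 V)}
    (hM : isMatching G M)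
    (hdeg : ∀ v : V, (G.neighborSet v).ncard = 1 ∨ (G.neighborSet v).ncard = 2)
    {v w : V} (hvw : v ≠ w) (hv : ¬ coveredBy M v) (hw : ¬ coveredBy M w) (n : ℕ) :
    ∀ l m x, l + m ≤ n → x ∈ Yseq G M {v} (2 * l) → x ∈ Yseq G M {w} (2 * m) → False := by
  have cov : ∀ a m x, x ∈ Yseq G M {a} (2 * (m + 1)) → ∃ y z, s(x, y) ∈ M ∧ G.Adj y z ∧
      z ∈ Yseq G M {a} (2 * m) := by
    intro a m x hx
    rw [show 2 * (m + 1) = 2 * m + 1 + 1 by ring, Yseq, if_neg (by simp), Yseq,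
      if_pos (by simp)] at hx
    obtain ⟨y, ⟨z, hz, hzy⟩, hyx⟩ := hx
    exact ⟨y, z, by rwa [Sym2.eq_swap], hzy.symm, hz⟩
  induction n with
  | zero =>
    intro l m x h hl hm
    obtain rfl : l = 0 := by omega
    obtain rfl : m = 0 := by omega
    simp only [Yseq, Set.mem_singleton_iff] at hl hm
    exact hvw (hl ▸ hm)
  | succ n ih =>
    intro l m x h hl hm
    rcases l with _ | l
    · rcases m with _ | m
      · simp only [Yseq, Set.mem_singleton_iff] at hl hm
        exact hvw (hl ▸ hm)
      · obtain ⟨y, z, hy, -, -⟩ := cov _ _ _ hm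
        simp only [Yseq, Set.mem_singleton_iff] at hl
        subst hl
        exact hv ⟨_, hy, by simp⟩
    · rcases m with _ | m
      · obtain ⟨y, z, hy, -, -⟩ := cov _ _ _ hl
        simp only [Yseq, Set.mem_singleton_iff] at hm
        subst hm
        exact hw ⟨_, hy, by simp⟩
      · obtain ⟨y, p, hy, hp, hpl⟩ := cov _ _ _ hl
        obtain ⟨y', q, hy', hq, hqm⟩ := cov _ _ _ hm
        obtain rfl := match_unique hM hy hy'
        have hx : G.Adj y x := (show G.Adj x y from hM.1 hy).symm
        by_cases hpx : p = x
        · subst hpx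
          exact ih l (m+1) _ (by omega) hpl hm
        by_cases hqx : q = x
        · subst hqx
          exact ih (l+1) m _ (by omega) hl hqm
        by_cases hpq : p = q
        · subst hpq
          exact ih l m _ (by omega) hpl hqm
        · have h3 : ({p, q, x} : Set V).ncard ≤ (G.neighborSet y).ncard := by
            apply Set.ncard_le_ncard _ (Set.toFinite _)
            rintro a (rfl | rfl | rfl) <;> assumption
          rw [Set.ncard_eq_three.2 ⟨p, q, x, hpq, hpx, hqx, rfl⟩] at h3
          have := hdeg y
          omega

theorem altW_aug {V : Type*} {G : SimpleGraph V} {M : Set (Sym2 V)} (hM : isMatching G M)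
    (hbip : isBipartite G) {v w : V} (hv : ¬ coveredBy M v) (hw : ¬ coveredBy M w) (L : ℕ) :
    Odd L → ∀ p, AltW G M v w p L → ∃ q, ∃ l ≤ L, isAugPath G M q l := by
  obtain ⟨A, hA⟩ := hbip
  induction L using Nat.strong_induction_on with
  | _ L ih =>
  intro hL p hp
  obtain ⟨h0, hl, hp⟩ := hp
  have par : ∀ i ≤ L, (p i ∈ A ↔ (Even i ↔ p 0 ∈ A)) := by
    intro i
    induction i with
    | zero => simp
    | succ i ih =>
      intro hi
      have h1 := ih (by omega)
      have h2 := hA _ _ (hp i (by omega)).1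
      rw [Nat.even_add_one]
      tauto
  by_cases hinj : ∃ i j, i < j ∧ j ≤ L ∧ p i = p j
  · obtain ⟨i, j, hij, hj, he⟩ := hinj
    have hev : Even (j - i) := by
      have h1 := par i (by omega)
      have h2 := par j hj
      rw [he] at h1
      rw [Nat.even_sub hij.le]
      tauto
    obtain ⟨d, hd⟩ := hev
    obtain ⟨k, hk⟩ := hL
    have := ih (L - (j - i)) (by omega) ⟨k - d, by omega⟩
      (fun t => if t ≤ i then p t else p (t + (j - i))) ?_
    · obtain ⟨q, l, hl, hq⟩ := this
      exact ⟨q, l, by omega, hq⟩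
    · refine ⟨by simp [h0], ?_, ?_⟩
      · dsimp only
        split_ifs with h
        · have h1 : L = j := by omega
          have h2 : L - (j - i) = i := by omega
          rw [h2, he, ← h1, hl]
        · rw [← hl]; congr 1; omega
      · intro t ht
        dsimp only
        rcases lt_trichotomy t i with h | h | h
        · rw [if_pos h.le, if_pos (by omega)]
          exact hp t (by omega)
        · subst h
          rw [if_pos le_rfl, if_neg (by omega), he]
          have h1 := hp j (by omega)
          rw [show t + 1 + (j - t) = j + 1 by omega]
          refine ⟨h1.1, fun ho => h1.2 ?_⟩
          obtain ⟨a, ha⟩ := ho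
          exact ⟨a + d, by omega⟩
        · rw [if_neg (by omega), if_neg (by omega)]
          have h1 := hp (t + (j - i)) (by omega)
          rw [show t + 1 + (j - i) = t + (j - i) + 1 by omega]
          refine ⟨h1.1, fun ho => h1.2 ?_⟩
          obtain ⟨a, ha⟩ := ho
          exact ⟨a + d, by omega⟩
  · have inj : ∀ i ≤ L, ∀ j ≤ L, p i = p j → i = j := by
      intro i hi j hj he
      by_contra hne
      rcases Nat.lt_or_gt_of_ne hne with h | h
      · exact hinj ⟨i, j, h, hj, he⟩
      · exact hinj ⟨j, i, h, hi, he.symm⟩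
    refine ⟨p, L, le_rfl, hL, fun i hi => (hp i hi).1, inj, by rwa [h0], by rwa [hl], ?_⟩
    intro i hi
    refine ⟨fun hm => ?_, (hp i hi).2⟩
    rcases i with _ | i
    · exact absurd ⟨_, hm, by simp [h0]⟩ hv
    · by_contra ho
      have ho' : Odd i := by
        rw [Nat.odd_add_one] at ho
        exact not_not.1 ho
      have h1 := (hp i (by omega)).2 ho'
      rw [Sym2.eq_swap] at h1
      have := inj _ (by omega) _ (by omega) (match_unique hM h1 hm)
      omega

theorem altW_concat {V : Type*} {G : SimpleGraph V} {M : Set (Sym2 V)} {v w u : V} {p q : ℕ → V}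
    {l m : ℕ} (hp : AltW G M v u p l) (hq : AltW G M w u q m) (hl : Even l) (hm : Odd m) :
    ∃ r, AltW G M v w r (l + m) := by
  obtain ⟨p0, pl, hp⟩ := hp
  obtain ⟨q0, qm, hq⟩ := hq
  obtain ⟨a, ha⟩ := hl
  obtain ⟨b, hb⟩ := hm
  have e : ∀ i, l ≤ i → (if i ≤ l then p i else q (l + m - i)) = q (l + m - i) := by
    intro i hi
    split_ifs with h
    · obtain rfl : i = l := by omega
      rw [pl, show i + m - i = m by omega, qm]
    · rfl
  refine ⟨fun i => if i ≤ l then p i else q (l + m - i), by simp [p0], ?_, ?_⟩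
  · dsimp only
    rw [e _ (by omega), Nat.sub_self, q0]
  · intro i hi
    dsimp only
    by_cases h : i < l
    · rw [if_pos h.le, if_pos (by omega)]
      exact hp i h
    · rw [e i (by omega), e (i+1) (by omega)]
      have h1 := hq (l + m - (i + 1)) (by omega)
      rw [show l + m - (i + 1) + 1 = l + m - i by omega] at h1
      refine ⟨h1.1.symm, fun ho => ?_⟩
      rw [Sym2.eq_swap]
      apply h1.2
      obtain ⟨c, hc⟩ := ho
      exact ⟨a + b - c - 1, by omega⟩

/-- In a finite bipartite graph whose vertices have degree 1 or 2, with matching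
`M` having no augmenting paths of length ≤ 2K+1 (K ≥ 2 even), if `v ≠ w` are both uncovered,
then no degree-1 vertex lies both in `⋃_{l=0}^{K} X_l(v)` and in `⋃_{l=0}^{K} X_l(w)`. -/
theorem stmt7 {V : Type*} [Fintype V] (G : SimpleGraph V) (M : Set (Sym2 V))
    (K : ℕ) (hK2 : 2 ≤ K) (hKeven : Even K)
    (hbip : isBipartite G)
    (hdeg : ∀ v : V, (G.neighborSet v).ncard = 1 ∨ (G.neighborSet v).ncard = 2)
    (hM : isMatching G M)
    (hnoaug : ∀ (p : ℕ → V) (l : ℕ), l ≤ 2 * K + 1 → ¬ isAugPath G M p l)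
    (v w : V) (hvw : v ≠ w)
    (hv : ¬ coveredBy M v) (hw : ¬ coveredBy M w) :
    ¬ ∃ u : V, (G.neighborSet u).ncard = 1 ∧
      u ∈ ⋃ l ∈ Finset.range (K + 1), Yseq G M {v} l ∧
      u ∈ ⋃ l ∈ Finset.range (K + 1), Yseq G M {w} l := by
  rintro ⟨u, hu, h1, h2⟩
  simp only [Set.mem_iUnion, Finset.mem_range, exists_prop] at h1 h2
  obtain ⟨l, hl, hul⟩ := h1
  obtain ⟨m, hm, hum⟩ := h2
  obtain ⟨p, hp⟩ := exists_altW hM v l u hul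
  obtain ⟨q, hq⟩ := exists_altW hM w m u hum
  rcases Nat.even_or_odd l with el | ol <;> rcases Nat.even_or_odd m with em | om
  · obtain ⟨a, rfl⟩ := el
    obtain ⟨b, rfl⟩ := em
    rw [← two_mul] at hul hum
    exact no_even_even hM hdeg hvw hv hw _ a b u le_rfl hul hum
  · obtain ⟨r, hr⟩ := altW_concat hp hq el om
    obtain ⟨s, n, hn, hs⟩ := altW_aug hM hbip hv hw _ (el.add_odd om) r hr
    exact hnoaug s n (by omega) hs
  · obtain ⟨r, hr⟩ := altW_concat hq hp em ol
    obtain ⟨s, n, hn, hs⟩ := altW_aug hM hbip hw hv _ (em.add_odd ol) r hr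
    exact hnoaug s n (by omega) hs
  · obtain ⟨a, rfl⟩ := ol
    obtain ⟨b, rfl⟩ := om
    simp only [Yseq, even_two, Even.mul_right, if_true] at hul hum
    obtain ⟨x, hx, hxu⟩ := hul
    obtain ⟨y, hy, hyu⟩ := hum
    obtain ⟨c, hc⟩ := Set.ncard_eq_one.1 hu
    have h1 : x ∈ G.neighborSet u := hxu.symm
    have h2 : y ∈ G.neighborSet u := hyu.symm
    rw [hc, Set.mem_singleton_iff] at h1 h2
    subst h1
    subst h2
    exact no_even_even hM hdeg hvw hv hw _ a b _ le_rfl hx hy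
end

section
/- Let G be a simple graph, M a matching in G, and p = v_0 v_1 … v_l an M-augmenting path. Let E(p) denote the set of edges of p. Then the symmetric difference M △ E(p) is again a matching in G, and the set of vertices covered by M △ E(p) equals the set of vertices covered by M together with v_0 and v_l. -/
/-- Flipping an augmenting path `p` for a matching `M` yields a matching
`M △ E(p)` covering exactly the vertices covered by `M` together with the two endpoints. -/
theorem stmt8 {V : Type*} (G : SimpleGraph V) (M : Set (Sym2 V))
    (hM : isMatching G M) (p : ℕ → V) (l : ℕ) (hp : isAugPath G M p l) :
    isMatching G (symmDiff M (pathEdges p l)) ∧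
    ∀ v : V, coveredBy (symmDiff M (pathEdges p l)) v ↔
      (coveredBy M v ∨ v = p 0 ∨ v = p l) := by
  obtain ⟨hsub, hdis⟩ := hM
  obtain ⟨hl, hadj, hinj, h0, hlast, halt⟩ := hp
  have key : ∀ e ∈ M, ∀ i ≤ l, p i ∈ e → e ∈ pathEdges p l := by
    intro e he i hi hv
    have hi0 : i ≠ 0 := by
      rintro rfl
      exact h0 ⟨e, he, hv⟩
    have hil : i ≠ l := by
      rintro rfl
      exact hlast ⟨e, he, hv⟩
    rcases Nat.even_or_odd i with hev | hod
    · obtain ⟨k, rfl⟩ : ∃ k, i = k + 1 := ⟨i - 1, by omega⟩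
      refine ⟨k, by omega, ?_⟩
      by_contra hne
      exact hdis e he _ ((halt k (by omega)).2 (by grind)) hne (p (k+1)) ⟨hv, by simp⟩
    · refine ⟨i, by omega, ?_⟩
      by_contra hne
      exact hdis e he _ ((halt i (by omega)).2 hod) hne (p i) ⟨hv, by simp⟩
  have mem : ∀ e, e ∈ symmDiff M (pathEdges p l) ↔
      (e ∈ M ∧ ∀ i ≤ l, p i ∉ e) ∨ ∃ i < l, Even i ∧ e = s(p i, p (i+1)) := by
    intro e
    rw [Set.mem_symmDiff]
    constructor
    · rintro (⟨h1, h2⟩ | ⟨⟨i, hi, rfl⟩, h2⟩)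
      · exact Or.inl ⟨h1, fun i hi hv => h2 (key e h1 i hi hv)⟩
      · refine Or.inr ⟨i, hi, ?_, rfl⟩
        rw [halt i hi] at h2
        exact Nat.not_odd_iff_even.1 h2
    · rintro (⟨h1, h2⟩ | ⟨i, hi, hev, rfl⟩)
      · refine Or.inl ⟨h1, ?_⟩
        rintro ⟨i, hi, rfl⟩
        exact h2 i hi.le (by simp)
      · refine Or.inr ⟨⟨i, hi, rfl⟩, ?_⟩
        rw [halt i hi]
        exact Nat.not_odd_iff_even.2 hev
  have cov : ∀ i ≤ l, coveredBy (symmDiff M (pathEdges p l)) (p i) := by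
    intro i hi
    rcases Nat.even_or_odd i with hev | hod
    · exact ⟨_, (mem _).2 (Or.inr ⟨i, by grind, hev, rfl⟩), by simp⟩
    · obtain ⟨k, rfl⟩ : ∃ k, i = k + 1 := ⟨i - 1, by grind⟩
      exact ⟨_, (mem _).2 (Or.inr ⟨k, by omega, by grind, rfl⟩), by simp⟩
  refine ⟨⟨?_, ?_⟩, ?_⟩
  · intro e he
    rcases (mem e).1 he with ⟨h, -⟩ | ⟨i, hi, -, rfl⟩
    · exact hsub h
    · exact hadj i hi
  · intro e he f hf hne v ⟨hve, hvf⟩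
    rcases (mem e).1 he with ⟨h1, h2⟩ | ⟨i, hi, hie, rfl⟩ <;>
      rcases (mem f).1 hf with ⟨h3, h4⟩ | ⟨j, hj, hje, rfl⟩
    · exact hdis e h1 f h3 hne v ⟨hve, hvf⟩
    · rcases Sym2.mem_iff.1 hvf with rfl | rfl
      · exact h2 _ (by omega) hve
      · exact h2 _ (by omega) hve
    · rcases Sym2.mem_iff.1 hve with rfl | rfl
      · exact h4 _ (by omega) hvf
      · exact h4 _ (by omega) hvf
    · have hij : i = j := by
        rcases Sym2.mem_iff.1 hve with rfl | rfl <;> rcases Sym2.mem_iff.1 hvf with h | h <;>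
          have := hinj _ (by omega) _ (by omega) h <;> grind
      exact hne (by rw [hij])
  · intro v
    constructor
    · rintro ⟨e, he, hv⟩
      rcases (mem e).1 he with ⟨h, -⟩ | ⟨i, hi, hev, rfl⟩
      · exact Or.inl ⟨e, h, hv⟩
      · rcases Sym2.mem_iff.1 hv with rfl | rfl
        · rcases i with _ | k
          · exact Or.inr (Or.inl rfl)
          · exact Or.inl ⟨_, (halt k (by omega)).2 (by grind), by simp⟩
        · by_cases h : i + 1 = l
          · exact Or.inr (Or.inr (by rw [h]))
          · exact Or.inl ⟨_, (halt (i+1) (by omega)).2 (by grind), by simp⟩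
    · rintro (⟨e, he, hv⟩ | rfl | rfl)
      · by_cases hpe : e ∈ pathEdges p l
        · obtain ⟨i, hi, rfl⟩ := hpe
          rcases Sym2.mem_iff.1 hv with rfl | rfl
          · exact cov _ (by omega)
          · exact cov _ (by omega)
        · exact ⟨e, Or.inl ⟨he, hpe⟩, hv⟩
      · exact cov _ (by omega)
      · exact cov _ le_rfl
end

section
/- Let G be a simple graph, M a matching in G, and let (p_i)_{i ∈ I} be a family of M-augmenting paths that are pairwise vertex-disjoint (no vertex lies on two distinct paths of the family). Then M △ ⋃_{i ∈ I} E(p_i) is a matching in G, and every vertex that is covered by M or is an endpoint of some p_i is covered by M △ ⋃_{i ∈ I} E(p_i). -/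
theorem aug_key {V : Type*} (G : SimpleGraph V) (M : Set (Sym2 V))
    (hM : isMatching G M) (p : ℕ → V) (l : ℕ) (h : isAugPath G M p l)
    (a : ℕ) (ha : a ≤ l) (e : Sym2 V) (he : e ∈ M) (hv : p a ∈ e) : e ∈ pathEdges p l := by
  obtain ⟨hl, -, -, h0, h1, halt⟩ := h
  have ha0 : a ≠ 0 := by rintro rfl; exact h0 ⟨e, he, hv⟩
  have hal : a ≠ l := by rintro rfl; exact h1 ⟨e, he, hv⟩
  rcases Nat.even_or_odd a with hev | hod
  · obtain ⟨b, rfl⟩ := Nat.exists_eq_succ_of_ne_zero ha0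
    have hb : Odd b := by
      rw [Nat.succ_eq_add_one] at hev; grind
    have hm := (halt b (by omega)).2 hb
    refine ⟨b, by omega, ?_⟩
    by_contra hne
    exact hM.2 _ he _ hm hne (p (b+1)) ⟨hv, by simp⟩
  · have hm := (halt a (by omega)).2 hod
    refine ⟨a, by omega, ?_⟩
    by_contra hne
    exact hM.2 _ he _ hm hne (p a) ⟨hv, by simp⟩

theorem stmt9 {V : Type*} {I : Type*} (G : SimpleGraph V) (M : Set (Sym2 V))
    (hM : isMatching G M) (p : I → ℕ → V) (len : I → ℕ)
    (haug : ∀ i : I, isAugPath G M (p i) (len i))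
    (hdisj : ∀ i j : I, i ≠ j → ∀ a ≤ len i, ∀ b ≤ len j, p i a ≠ p j b) :
    isMatching G (symmDiff M (⋃ i : I, pathEdges (p i) (len i))) ∧
    ∀ v : V, (coveredBy M v ∨ ∃ i : I, v = p i 0 ∨ v = p i (len i)) →
      coveredBy (symmDiff M (⋃ i : I, pathEdges (p i) (len i))) v := by
  have hN : ∀ e, e ∈ symmDiff M (⋃ i : I, pathEdges (p i) (len i)) ↔
      (e ∈ M ∧ ∀ i, ∀ a ≤ len i, p i a ∉ e) ∨
      ∃ i, ∃ b < len i, Even b ∧ e = s(p i b, p i (b+1)) := by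
    intro e
    rw [Set.mem_symmDiff]
    simp only [Set.mem_iUnion, not_exists]
    constructor
    · rintro (⟨h1, h2⟩ | ⟨⟨i, b, hb, rfl⟩, h2⟩)
      · exact Or.inl ⟨h1, fun i a ha hv => h2 i (aug_key G M hM _ _ (haug i) a ha e h1 hv)⟩
      · right
        refine ⟨i, b, hb, ?_, rfl⟩
        rw [(haug i).2.2.2.2.2 b hb] at h2
        exact Nat.not_odd_iff_even.1 h2
    · rintro (⟨h1, h2⟩ | ⟨i, b, hb, hev, rfl⟩)
      · refine Or.inl ⟨h1, ?_⟩
        rintro i ⟨b, hb, rfl⟩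
        exact h2 i b hb.le (by simp)
      · refine Or.inr ⟨⟨i, b, hb, rfl⟩, ?_⟩
        rw [(haug i).2.2.2.2.2 b hb]
        exact Nat.not_odd_iff_even.2 hev
  have hpath : ∀ i, ∀ a ≤ len i,
      coveredBy (symmDiff M (⋃ i : I, pathEdges (p i) (len i))) (p i a) := by
    intro i a ha
    have hl := (haug i).1
    rcases Nat.even_or_odd a with hev | hod
    · have : a < len i := by
        rcases ha.lt_or_eq with h | h
        · exact h
        · subst h; exact absurd hl (Nat.not_odd_iff_even.2 hev)
      exact ⟨_, (hN _).2 (Or.inr ⟨i, a, this, hev, rfl⟩), by simp⟩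
    · obtain ⟨k, rfl⟩ := hod
      exact ⟨_, (hN _).2 (Or.inr ⟨i, 2 * k, by omega, by simp, rfl⟩), by simp⟩
  refine ⟨⟨?_, ?_⟩, ?_⟩
  · intro e he
    rcases (hN e).1 he with ⟨h, -⟩ | ⟨i, b, hb, -, rfl⟩
    · exact hM.1 h
    · exact (haug i).2.1 b hb
  · rintro e he f hf hne v ⟨hve, hvf⟩
    rcases (hN e).1 he with ⟨h1, h2⟩ | ⟨i, b, hb, hev, rfl⟩ <;>
    rcases (hN f).1 hf with ⟨h3, h4⟩ | ⟨j, c, hc, hcv, rfl⟩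
    · exact hM.2 _ h1 _ h3 hne v ⟨hve, hvf⟩
    · rcases Sym2.mem_iff.1 hvf with rfl | rfl
      · exact h2 _ _ hc.le hve
      · exact h2 _ _ hc hve
    · rcases Sym2.mem_iff.1 hve with rfl | rfl
      · exact h4 _ _ hb.le hvf
      · exact h4 _ _ hb hvf
    · have e1 : ∃ x, x ≤ len i ∧ x / 2 = b / 2 ∧ v = p i x := by
        obtain ⟨k, rfl⟩ := hev
        rcases Sym2.mem_iff.1 hve with h | h
        · exact ⟨_, hb.le, rfl, h⟩
        · exact ⟨_, hb, by omega, h⟩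
      have e2 : ∃ x, x ≤ len j ∧ x / 2 = c / 2 ∧ v = p j x := by
        obtain ⟨k, rfl⟩ := hcv
        rcases Sym2.mem_iff.1 hvf with h | h
        · exact ⟨_, hc.le, rfl, h⟩
        · exact ⟨_, hc, by omega, h⟩
      obtain ⟨x, hx, hxb, hvx⟩ := e1
      obtain ⟨y, hy, hyc, hvy⟩ := e2
      by_cases hij : i = j
      · subst hij
        have := (haug i).2.2.1 x hx y hy (hvx.symm.trans hvy)
        obtain ⟨k, rfl⟩ := hev
        obtain ⟨m, rfl⟩ := hcv
        have : k = m := by omega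
        subst this
        exact hne rfl
      · exact hdisj i j hij x hx y hy (hvx.symm.trans hvy)
  · intro v hv
    by_cases hp : ∃ i, ∃ a ≤ len i, v = p i a
    · obtain ⟨i, a, ha, rfl⟩ := hp
      exact hpath i a ha
    · rcases hv with ⟨e, he, hve⟩ | ⟨i, h | h⟩
      · refine ⟨e, ?_, hve⟩
        rw [Set.mem_symmDiff]
        refine Or.inl ⟨he, ?_⟩
        simp only [Set.mem_iUnion, not_exists]
        rintro i ⟨b, hb, rfl⟩
        rcases Sym2.mem_iff.1 hve with h | h
        · exact hp ⟨i, b, hb.le, h⟩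
        · exact hp ⟨i, b+1, hb, h⟩
      · exact absurd ⟨i, 0, Nat.zero_le _, h⟩ hp
      · exact absurd ⟨i, _, le_rfl, h⟩ hp
end

section
/- Let G be a simple graph, L ∈ ℕ, and let (M_k)_{k ∈ ℕ} be a sequence of matchings in G such that for every k there is a family P_k of pairwise vertex-disjoint M_k-augmenting paths, each of length at most L, with M_{k+1} = M_k △ ⋃_{p ∈ P_k} E(p). Then for every edge e = {a, b} of G whose ball B_L(a) = {x : x is the endpoint of some walk in G starting at a of length ≤ L} is finite, the number of indices k for which e lies on some path of P_k is finite; in fact, 2 · |{k : e ∈ ⋃_{p ∈ P_k} E(p)}| ≤ |B_L(a)|. -/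
theorem aux_walk {V : Type*} (G : SimpleGraph V) (p : ℕ → V) (l : ℕ)
    (h : ∀ i < l, G.Adj (p i) (p (i+1))) (i : ℕ) :
    ∀ d, i + d ≤ l → ∃ w : G.Walk (p i) (p (i+d)), w.length = d := by
  intro d
  induction d with
  | zero => intro _; exact ⟨SimpleGraph.Walk.nil, rfl⟩
  | succ d ih =>
    intro hd
    obtain ⟨w, hw⟩ := ih (by omega)
    refine ⟨w.concat (h (i+d) (by omega)), ?_⟩
    simp [hw]

theorem aux_new {V : Type*} (M : ℕ → Set (Sym2 V)) (P : ℕ → Set ((ℕ → V) × ℕ))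
    (hstep : ∀ k : ℕ, M (k+1) = symmDiff (M k) (⋃ q ∈ P k, pathEdges q.1 q.2))
    (k : ℕ) (q : (ℕ → V) × ℕ) (hq : q ∈ P k) (i : ℕ) (hi : i < q.2)
    (hn : s(q.1 i, q.1 (i+1)) ∉ M k) : 
    coveredBy (M (k+1)) (q.1 i) ∧ coveredBy (M (k+1)) (q.1 (i+1)) := by
  have : s(q.1 i, q.1 (i+1)) ∈ M (k+1) := by
    rw [hstep, Set.mem_symmDiff]
    right
    refine ⟨?_, hn⟩
    simp only [Set.mem_iUnion]
    exact ⟨q, hq, i, hi, rfl⟩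
  exact ⟨⟨_, this, by simp⟩, ⟨_, this, by simp⟩⟩

theorem aux_mono {V : Type*} (G : SimpleGraph V)
    (M : ℕ → Set (Sym2 V)) (P : ℕ → Set ((ℕ → V) × ℕ))
    (haug : ∀ k : ℕ, ∀ q ∈ P k, isAugPath G (M k) q.1 q.2)
    (hstep : ∀ k : ℕ, M (k+1) = symmDiff (M k) (⋃ q ∈ P k, pathEdges q.1 q.2))
    (k : ℕ) (v : V) (h : coveredBy (M k) v) : coveredBy (M (k+1)) v := by
  obtain ⟨e, he, hv⟩ := h
  by_cases hu : e ∈ ⋃ q ∈ P k, pathEdges q.1 q.2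
  · simp only [Set.mem_iUnion] at hu
    obtain ⟨q, hq, i, hi, rfl⟩ := hu
    obtain ⟨hodd, -, -, -, -, halt⟩ := haug k q hq
    obtain ⟨m, rfl⟩ := (halt i hi).1 he
    obtain ⟨n, hn⟩ := hodd
    rcases Sym2.mem_iff.1 hv with rfl | rfl
    · refine (aux_new M P hstep k q hq (2*m) (by omega) ?_).2
      rw [halt _ (by omega)]
      simp
    · refine (aux_new M P hstep k q hq (2*m+1+1) (by omega) ?_).1
      rw [halt _ (by omega)]
      rintro ⟨c, hc⟩
      omega
  · refine ⟨e, ?_, hv⟩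
    rw [hstep, Set.mem_symmDiff]
    exact Or.inl ⟨he, hu⟩

/-- If `M_{k+1}` arises from `M_k` by flipping a family `P_k` of pairwise
vertex-disjoint `M_k`-augmenting paths of length ≤ L, then an edge `{a,b}` of `G` whose
ball `B_L(a)` of radius `L` is finite lies on paths of `P_k` for only finitely many `k`;
in fact `2·|{k : {a,b} ∈ ⋃_{p ∈ P_k} E(p)}| ≤ |B_L(a)|`. -/
theorem stmt10 {V : Type*} (G : SimpleGraph V) (L : ℕ)
    (M : ℕ → Set (Sym2 V)) (P : ℕ → Set ((ℕ → V) × ℕ))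
    (hM : ∀ k : ℕ, isMatching G (M k))
    (haug : ∀ k : ℕ, ∀ q ∈ P k, isAugPath G (M k) q.1 q.2 ∧ q.2 ≤ L)
    (hdisj : ∀ k : ℕ, ∀ q ∈ P k, ∀ q' ∈ P k, q ≠ q' →
      ∀ a ≤ q.2, ∀ b ≤ q'.2, q.1 a ≠ q'.1 b)
    (hstep : ∀ k : ℕ, M (k+1) = symmDiff (M k) (⋃ q ∈ P k, pathEdges q.1 q.2))
    (a b : V) (hab : G.Adj a b)
    (hball : {x : V | ∃ w : G.Walk a x, w.length ≤ L}.Finite) :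
    {k : ℕ | ∃ q ∈ P k, s(a, b) ∈ pathEdges q.1 q.2}.Finite ∧
    2 * ({k : ℕ | ∃ q ∈ P k, s(a, b) ∈ pathEdges q.1 q.2}).ncard
      ≤ ({x : V | ∃ w : G.Walk a x, w.length ≤ L}).ncard := by
  classical
  have hmono : ∀ v, ∀ k k', k ≤ k' → coveredBy (M k) v → coveredBy (M k') v := by
    intro v k k' hk h
    induction k', hk using Nat.le_induction with
    | base => exact h
    | succ n _ ih => exact aux_mono G M P (fun k q hq => (haug k q hq).1) hstep n v ih
  set S : Set ℕ := {k : ℕ | ∃ q ∈ P k, s(a, b) ∈ pathEdges q.1 q.2} with hS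
  set B : Set V := {x : V | ∃ w : G.Walk a x, w.length ≤ L} with hB
  have key : ∀ k ∈ S, ∃ g : Bool → V, g true ≠ g false ∧
      ∀ c, g c ∈ B ∧ ¬ coveredBy (M k) (g c) ∧ coveredBy (M (k+1)) (g c) := by
    rintro k ⟨⟨p, l⟩, hq, i, hi, hei⟩
    obtain ⟨⟨hodd, hadj, hinj, h0, hl, halt⟩, hlL⟩ := haug k _ hq
    simp only at hi hei hodd hadj hinj h0 hl halt hlL
    obtain ⟨n, rfl⟩ := hodd
    have ha : ∃ j ≤ 2*n+1, a = p j := by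
      have : a ∈ s(p i, p (i+1)) := by rw [← hei]; simp
      rcases Sym2.mem_iff.1 this with h | h
      · exact ⟨i, by omega, h⟩
      · exact ⟨i+1, by omega, h⟩
    obtain ⟨j, hj, rfl⟩ := ha
    refine ⟨fun c => if c then p 0 else p (2*n+1), ?_, ?_⟩
    · intro h
      have := hinj 0 (by omega) (2*n+1) le_rfl (by simpa using h)
      omega
    · rintro (_ | _)
      · refine ⟨?_, by simpa using hl, ?_⟩
        · have hex := aux_walk G p (2*n+1) hadj j (2*n+1-j) (by omega)
          rw [Nat.add_sub_cancel' hj] at hex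
          obtain ⟨w, hw⟩ := hex
          exact ⟨w, by omega⟩
        · have := (aux_new M P hstep k _ hq (2*n) (by simp) (by
            simp only; rw [halt _ (by omega)]; simp)).2
          simpa using this
      · refine ⟨?_, by simpa using h0, ?_⟩
        · have hex := aux_walk G p (2*n+1) hadj 0 j (by omega)
          rw [Nat.zero_add] at hex
          obtain ⟨w, hw⟩ := hex
          exact ⟨w.reverse, by simp; omega⟩
        · have := (aux_new M P hstep k _ hq 0 (by simp) (by
            simp only; rw [halt _ (by omega)]; simp)).1
          simpa using this
  have : Nonempty V := ⟨a⟩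
  choose! g hg1 hg2 using key
  have hmaps : Set.MapsTo (fun x : ℕ × Bool => g x.1 x.2) (S ×ˢ (Set.univ : Set Bool)) B :=
    fun x hx => (hg2 x.1 hx.1 x.2).1
  have hinj : Set.InjOn (fun x : ℕ × Bool => g x.1 x.2) (S ×ˢ (Set.univ : Set Bool)) := by
    rintro ⟨k, c⟩ ⟨hk, -⟩ ⟨k', c'⟩ ⟨hk', -⟩ h
    simp only at h hk hk'
    have hkk : k = k' := by
      obtain ⟨-, h1, h2⟩ := hg2 k hk c
      obtain ⟨-, h1', h2'⟩ := hg2 k' hk' c'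
      rw [← h] at h1' h2'
      rcases lt_trichotomy k k' with hlt | heq | hlt
      · exact absurd (hmono _ _ _ hlt h2) h1'
      · exact heq
      · exact absurd (hmono _ _ _ hlt h2') h1
    subst hkk
    have hne := hg1 k hk
    cases c <;> cases c'
    · rfl
    · exact absurd h.symm hne
    · exact absurd h hne
    · rfl
  have hfin := Set.Finite.of_injOn hmaps hinj hball
  have hcard := Set.ncard_le_ncard_of_injOn _ hmaps hinj hball
  refine ⟨?_, ?_⟩
  · exact (hfin.image Prod.fst).subset (fun k hk => ⟨(k, true), ⟨hk, trivial⟩, rfl⟩)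
  · rw [Set.ncard_prod, Set.ncard_univ] at hcard
    simp at hcard
    omega
end

section
/- Let G be a finite simple graph, M a matching in G, and K ∈ ℕ. Then there is a matching M' in G such that every vertex covered by M is covered by M' and M' has no augmenting paths of length ≤ 2K+1. -/
theorem aug_step {V : Type*} (G : SimpleGraph V) (M : Set (Sym2 V))
    (hM : isMatching G M) (p : ℕ → V) (l : ℕ) (h : isAugPath G M p l) :
    ∃ N : Set (Sym2 V), isMatching G N ∧ (∀ v : V, coveredBy M v → coveredBy N v) ∧
      coveredBy N (p 0) := by
  obtain ⟨hl, hadj, hinj, h0, hend, halt⟩ := h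
  let N : Set (Sym2 V) := {e | e ∈ M ∧ ∀ i ≤ l, p i ∉ e} ∪
    {e | ∃ j, 2 * j < l ∧ e = s(p (2 * j), p (2 * j + 1))}
  have hpath : ∀ i ≤ l, coveredBy N (p i) := by
    intro i hi
    rcases Nat.even_or_odd' i with ⟨k, rfl | rfl⟩
    · refine ⟨s(p (2 * k), p (2 * k + 1)), Or.inr ⟨k, ?_, rfl⟩, by simp⟩
      rcases hl with ⟨m, rfl⟩; omega
    · exact ⟨s(p (2 * k), p (2 * k + 1)), Or.inr ⟨k, by omega, rfl⟩, by simp⟩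
  refine ⟨N, ⟨?_, ?_⟩, ?_, hpath 0 (Nat.zero_le _)⟩
  · rintro e (⟨he, -⟩ | ⟨j, hj, rfl⟩)
    · exact hM.1 he
    · exact hadj _ hj
  · rintro e (⟨he, he'⟩ | ⟨j, hj, rfl⟩) f (⟨hf, hf'⟩ | ⟨k, hk, rfl⟩) hne v ⟨hv, hw⟩
    · exact hM.2 e he f hf hne v ⟨hv, hw⟩
    · rcases Sym2.mem_iff.1 hw with rfl | rfl
      · exact he' _ hk.le hv
      · exact he' _ hk hv
    · rcases Sym2.mem_iff.1 hv with rfl | rfl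
      · exact hf' _ hj.le hw
      · exact hf' _ hj hw
    · have : j = k := by
        rcases Sym2.mem_iff.1 hv with rfl | rfl <;> rcases Sym2.mem_iff.1 hw with h | h
        · have := hinj _ (by omega) _ (by omega) h; omega
        · have := hinj _ (by omega) _ (by omega) h; omega
        · have := hinj _ (by omega) _ (by omega) h; omega
        · have := hinj _ (by omega) _ (by omega) h; omega
      exact hne (by rw [this])
  · rintro v ⟨e, he, hv⟩
    by_cases hp : ∀ i ≤ l, p i ∉ e
    · exact ⟨e, Or.inl ⟨he, hp⟩, hv⟩
    push Not at hp
    obtain ⟨i, hi, hie⟩ := hp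
    have key : ∀ k < l, Odd k → (i = k ∨ i = k + 1) → coveredBy N v := by
      intro k hk hko hik
      have hm := (halt k hk).2 hko
      have heq : e = s(p k, p (k + 1)) := by
        by_contra hne
        refine hM.2 e he _ hm hne (p i) ⟨hie, ?_⟩
        rcases hik with rfl | rfl <;> simp
      rw [heq] at hv
      rcases Sym2.mem_iff.1 hv with rfl | rfl
      · exact hpath _ hk.le
      · exact hpath _ hk
    have hi0 : i ≠ 0 := by rintro rfl; exact h0 ⟨e, he, hie⟩
    have hil : i ≠ l := by rintro rfl; exact hend ⟨e, he, hie⟩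
    rcases Nat.even_or_odd' i with ⟨k, hk | hk⟩
    · exact key (i - 1) (by omega) ⟨k - 1, by omega⟩ (by omega)
    · exact key i (by omega) ⟨k, hk⟩ (Or.inl rfl)

/-- In a finite graph, every matching `M` can be improved to a matching `M'`
covering all vertices covered by `M` and having no augmenting paths of length ≤ 2K+1. -/
theorem stmt12 {V : Type*} [Fintype V] (G : SimpleGraph V) (M : Set (Sym2 V))
    (hM : isMatching G M) (K : ℕ) :
    ∃ M' : Set (Sym2 V), isMatching G M' ∧
      (∀ v : V, coveredBy M v → coveredBy M' v) ∧
      ∀ (p : ℕ → V) (l : ℕ), l ≤ 2 * K + 1 → ¬ isAugPath G M' p l := by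
  have hfin : {C : Set V | ∃ N, isMatching G N ∧ (∀ v, coveredBy M v → coveredBy N v) ∧
      C = {v | coveredBy N v}}.Finite := Set.toFinite _
  obtain ⟨C, hC⟩ := hfin.exists_maximal ⟨_, M, hM, fun _ h => h, rfl⟩
  obtain ⟨⟨N, hN, hcov, rfl⟩, hmax⟩ := hC
  refine ⟨N, hN, hcov, fun p l _ hp => ?_⟩
  obtain ⟨N', hN', hcov', hp0⟩ := aug_step G N hN p l hp
  exact hp.2.2.2.1 (hmax ⟨N', hN', fun v hv => hcov' v (hcov v hv), rfl⟩ hcov' hp0)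
end
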